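/- arXiv:1710.06093 — 9 statements merged into one kernel-verified Lean document; each statement's English description precedes it below -/
import Mathlib

section
/- The following two conditions on A are equivalent: (1) for every choice (j_1, …, j_k) with 1 ≤ j_i ≤ n_i, every principal minor of the k × k matrix A_{j_1⋯j_k} = (a_{p, j_q}^q)_{1 ≤ p, q ≤ k} equals 1, i.e. for every subset S ⊆ {1, …, k} the determinant of the submatrix of A_{j_1⋯j_k} with rows and columns indexed by S equals 1; (2) for every choice (ℓ_1, …, ℓ_k) with 0 ≤ ℓ_i ≤ n_i, the following n vectors form a basis of 𝔽₂ⁿ (whose coordinates are indexed by the pairs (i, m) with 1 ≤ i ≤ k, 1 ≤ m ≤ n_i): the standard basis vectors e_{(i,m)} for all 1 ≤ i ≤ k and 1 ≤ m ≤ n_i with m ≠ ℓ_i, together with, for each i with ℓ_i ≥ 1, the i-th row a_i = (a_{i,1}^1, …, a_{i,n_1}^1, …, a_{i,1}^k, …, a_{i,n_k}^k) of A. -/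
/-!
Replacing the rows of the identity matrix indexed by a set `T` with the rows of a square matrix `B`
gives a matrix which is block triangular, with diagonal blocks `B[T, T]` and the identity. So the
replaced rows form a basis exactly when the principal minor of `B` on `T` is a unit. Here `B` has
the row `a i` in every position `(i, m)`, and `T` meets each block at most once. Since the blocks
are nonempty, such a `T` amounts to a set `S` of blocks together with the restriction to `S` of a
choice `j` of one column in every block, and then `B[T, T]` is the submatrix on `S` selected by `j`.
-/

section RowExchange

variable {m R : Type*} [Fintype m] [DecidableEq m] [CommRing R]

theorem det_ite_row_single (B : Matrix m m R) (p : m → Prop) [DecidablePred p] :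
    (Matrix.of fun x => if p x then B x else Pi.single x 1).det =
      (B.toSquareBlockProp p).det := by
  rw [Matrix.twoBlockTriangular_det _ p]
  · have rows_in : Matrix.toSquareBlockProp
        (Matrix.of fun x => if p x then B x else Pi.single x 1) p = B.toSquareBlockProp p := by
      ext x y
      simp [Matrix.toSquareBlockProp_def, x.2]
    have rows_out : Matrix.toSquareBlockProp
        (Matrix.of fun x => if p x then B x else Pi.single x 1) (fun x => ¬p x) = 1 := by
      ext x y
      simp [Matrix.toSquareBlockProp_def, x.2, Pi.single_apply, Matrix.one_apply, Subtype.ext_iff,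
        eq_comm]
    rw [rows_in, rows_out, Matrix.det_one, mul_one]
  · intro x hx y hy
    have hyx : y ≠ x := fun h => hx (h ▸ hy)
    simp [hx, hyx]

theorem linearIndependent_and_span_eq_top_iff_isUnit_det (v : m → m → R) :
    LinearIndependent R v ∧ Submodule.span R (Set.range v) = ⊤ ↔ IsUnit (Matrix.of v).det := by
  rw [(Pi.basisFun R m).is_basis_iff_det, Pi.basisFun_det]
  rfl

theorem linearIndependent_and_span_eq_top_ite_row_single_iff (B : Matrix m m R) (p : m → Prop)
    [DecidablePred p] :
    LinearIndependent R (fun x => if p x then B x else Pi.single x 1) ∧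
        Submodule.span R (Set.range fun x => if p x then B x else Pi.single x 1) = ⊤ ↔
      IsUnit (B.toSquareBlockProp p).det := by
  rw [linearIndependent_and_span_eq_top_iff_isUnit_det, det_ite_row_single]

end RowExchange

section PartialSection

variable {ι : Type*} [DecidableEq ι] {κ : ι → Type*}

/-- The partial section of the family `κ` that agrees with `j` on `S` and is undefined (`none`)
elsewhere. It encodes a choice `ℓ`, with `none` in the role of `ℓ i = 0`. -/
def partialSection (j : ∀ i, κ i) (S : Finset ι) (i : ι) : Option (κ i) :=
  if i ∈ S then some (j i) else none

theorem some_eq_partialSection_iff {j : ∀ i, κ i} {S : Finset ι} {i : ι} {c : κ i} :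
    some c = partialSection j S i ↔ i ∈ S ∧ c = j i := by
  simp [partialSection]

theorem exists_partialSection_eq [Finite ι] [∀ i, Nonempty (κ i)] (ℓ : ∀ i, Option (κ i)) :
    ∃ (j : ∀ i, κ i) (S : Finset ι), partialSection j S = ℓ := by
  cases nonempty_fintype ι
  refine ⟨fun i => (ℓ i).getD (Classical.arbitrary _), ({i | (ℓ i).isSome} : Finset ι),
    funext fun i => ?_⟩
  cases h : ℓ i <;> simp [partialSection, h]

/-- The index set of a partial section, identified with its graph. -/
def partialSectionGraphEquiv (j : ∀ i, κ i) (S : Finset ι) :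
    S ≃ {x : Σ i, κ i // some x.2 = partialSection j S x.1} where
  toFun i := ⟨⟨i, j i⟩, some_eq_partialSection_iff.mpr ⟨i.2, rfl⟩⟩
  invFun x := ⟨x.1.1, (some_eq_partialSection_iff.mp x.2).1⟩
  left_inv _ := rfl
  right_inv := fun ⟨⟨i, c⟩, hc⟩ => by
    obtain rfl : c = j i := (some_eq_partialSection_iff.mp hc).2
    rfl

theorem det_toSquareBlockProp_partialSection {R : Type*} [CommRing R] [Fintype ι]
    [∀ i, Fintype (κ i)] [∀ i, DecidableEq (κ i)]
    (B : Matrix (Σ i, κ i) (Σ i, κ i) R) (j : ∀ i, κ i) (S : Finset ι) :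
    (B.toSquareBlockProp fun x => some x.2 = partialSection j S x.1).det =
      (Matrix.of fun p q : S => B ⟨p, j p⟩ ⟨q, j q⟩).det :=
  (Matrix.det_submatrix_equiv_self (partialSectionGraphEquiv j S) _).symm

end PartialSection

theorem stmt_0_general {ι R : Type*} [Finite ι] [DecidableEq ι] [CommRing R] {κ : ι → Type*}
    [∀ i, Finite (κ i)] [∀ i, DecidableEq (κ i)] [∀ i, Nonempty (κ i)]
    (a : ι → (i : ι) → κ i → R) :
    (∀ (j : ∀ i, κ i) (S : Finset ι),
        IsUnit (Matrix.of fun p q : S => a p q (j q)).det) ↔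
      ∀ ℓ : ∀ i, Option (κ i),
        LinearIndependent R
          (fun x : Σ i, κ i =>
            if some x.2 = ℓ x.1 then (fun y : Σ i, κ i => a x.1 y.1 y.2) else Pi.single x 1) ∧
        Submodule.span R
          (Set.range fun x : Σ i, κ i =>
            if some x.2 = ℓ x.1 then (fun y : Σ i, κ i => a x.1 y.1 y.2) else Pi.single x 1) =
          ⊤ := by
  cases nonempty_fintype ι
  have (i : ι) : Fintype (κ i) := Fintype.ofFinite _
  let B : Matrix (Σ i, κ i) (Σ i, κ i) R := Matrix.of fun x y => a x.1 y.1 y.2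
  have basis_iff (ℓ : ∀ i, Option (κ i)) :=
    linearIndependent_and_span_eq_top_ite_row_single_iff B fun x => some x.2 = ℓ x.1
  constructor
  · intro minors ℓ
    obtain ⟨j, S, rfl⟩ := exists_partialSection_eq ℓ
    exact (basis_iff _).mpr (det_toSquareBlockProp_partialSection B j S ▸ minors j S)
  · intro bases j S
    exact det_toSquareBlockProp_partialSection B j S ▸ (basis_iff _).mp (bases _)

/-- Fix `k ≥ 1`, block sizes `n i ≥ 1`, and a `k × n` matrix over `𝔽₂` with
entries `a j i m` (`= a_{j, m}^{i}` in the paper, with `m` 0-indexed within the `i`-th block).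
The following are equivalent:
(1) for every choice `j` of one column index in each block, every principal minor of the `k × k`
matrix `(p, q) ↦ a p q (j q)` equals `1`;
(2) for every choice `ℓ` with `ℓ i ∈ {0, …, n i}`, the family of vectors in `𝔽₂ⁿ` (coordinates
indexed by pairs `(i, m)`) consisting of the standard basis vectors `e_{(i,m)}` for `m + 1 ≠ ℓ i`
together with, for each `i` with `ℓ i ≥ 1`, the `i`-th row of the matrix (in place of
`e_{(i, ℓ i - 1)}`), is a basis of `𝔽₂ⁿ`. -/
theorem stmt_0 (k : ℕ) (hk : 1 ≤ k) (n : Fin k → ℕ) (hn : ∀ i, 1 ≤ n i)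
    (a : Fin k → (i : Fin k) → Fin (n i) → ZMod 2) :
    (∀ j : (q : Fin k) → Fin (n q), ∀ S : Finset (Fin k),
        (Matrix.of (fun p q : {x // x ∈ S} => a p.1 q.1 (j q.1))).det = 1) ↔
    (∀ ℓ : (i : Fin k) → Fin (n i + 1),
        LinearIndependent (ZMod 2)
          (fun x : Σ i : Fin k, Fin (n i) =>
            if x.2.succ = ℓ x.1 then (fun y : Σ i : Fin k, Fin (n i) => a x.1 y.1 y.2)
            else Pi.single x (1 : ZMod 2)) ∧
        Submodule.span (ZMod 2)
          (Set.range (fun x : Σ i : Fin k, Fin (n i) =>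
            if x.2.succ = ℓ x.1 then (fun y : Σ i : Fin k, Fin (n i) => a x.1 y.1 y.2)
            else Pi.single x (1 : ZMod 2))) = ⊤) := by
  have (i : Fin k) : Nonempty (Fin (n i)) := Fin.pos_iff_nonempty.mp (hn i)
  simpa only [isUnit_iff_eq_one, Equiv.piCongrRight_apply, Pi.map_apply, ← finSuccEquiv_succ,
    EmbeddingLike.apply_eq_iff_eq] using (stmt_0_general a).trans
      (Equiv.piCongrRight fun i => finSuccEquiv (n i)).surjective.forall
end

section
/- Suppose that for every choice (j_1, …, j_k) with 1 ≤ j_i ≤ n_i, every principal minor of the k × k matrix A_{j_1⋯j_k} = (a_{p, j_q}^q)_{1 ≤ p, q ≤ k} equals 1. Then there exists a permutation σ of {1, …, k} such that the matrix B with entries b_{p,m}^q = a_{σ(p), m}^{σ(q)} (for 1 ≤ p, q ≤ k and 1 ≤ m ≤ n_{σ(q)}) is in unipotent upper triangular form, i.e. b_{p,m}^q = 0 whenever p > q, and b_{p,m}^p = 1 for all 1 ≤ p ≤ k and 1 ≤ m ≤ n_{σ(p)}. -/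
/-!
Join `p` to `q` when some column of the `q`-th block has a nonzero entry in row `p ≠ q`. If this
digraph had a directed cycle, take a minimal set `S` of indices each of which has a predecessor
in `S`; the digraph induced on `S` is a chordless cycle. Choosing in each block of `S` a column
that witnesses the edge of the cycle entering it gives a principal submatrix whose determinant has
just two terms, the diagonal one, equal to `1`, and the one of the cycle, which is nonzero. So the
minor is not `1`. Hence the digraph is acyclic and any topological sort of it is the
required ordering.
-/

section ChordlessCycle

/-- A nonempty set of vertices of the digraph `r` in which every vertex has a predecessor. The
minimal ones are the chordless cycles (loops included). -/
def Sourceless {ι : Type*} (r : ι → ι → Prop) (S : Finset ι) : Prop :=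
  S.Nonempty ∧ ∀ q ∈ S, ∃ p ∈ S, r p q

namespace Sourceless

variable {ι : Type*} {r : ι → ι → Prop} {S : Finset ι}

theorem exists_pred (hS : Sourceless r S) (q : S) : ∃ p : S, r p q :=
  let ⟨p, hp, hpq⟩ := hS.2 q q.2
  ⟨⟨p, hp⟩, hpq⟩

theorem eq_univ_of_minimal (hS : Minimal (Sourceless r) S) {T : Finset S} (hT : T.Nonempty)
    (hpred : ∀ q ∈ T, ∃ p ∈ T, r p q) : T = Finset.univ := by
  have hT' : Sourceless r (T.map (Function.Embedding.subtype _)) := by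
    refine ⟨hT.map, fun q hq ↦ ?_⟩
    obtain ⟨q, hqT, rfl⟩ := Finset.mem_map.1 hq
    obtain ⟨p, hpT, hpq⟩ := hpred q hqT
    exact ⟨p, Finset.mem_map_of_mem _ hpT, hpq⟩
  refine Finset.eq_univ_of_forall fun q ↦ ?_
  simpa using hS.le_of_le hT' (Finset.map_subtype_subset T) q.2

theorem injective_of_minimal (hS : Minimal (Sourceless r) S) {g : S → S}
    (hg : ∀ q, r (g q) q) : Function.Injective g := by
  classical
  have : Nonempty S := hS.prop.1.to_subtype
  have himage : Finset.univ.image g = Finset.univ :=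
    eq_univ_of_minimal hS (Finset.univ_nonempty.image g)
      fun q _ ↦ ⟨g q, Finset.mem_image_of_mem g (Finset.mem_univ q), hg q⟩
  exact Finite.injective_iff_surjective.2 fun q ↦ by
    simpa using himage.ge (Finset.mem_univ q)

theorem pred_unique_of_minimal (hS : Minimal (Sourceless r) S) {p p' q : S}
    (hp : r p q) (hp' : r p' q) : p = p' := by
  classical
  choose g hg using hS.prop.exists_pred
  have hupdate (x : S) (hx : r x q) : ∀ y, r (Function.update g q x y) y := by
    intro y
    obtain rfl | hy := eq_or_ne y q
    · simpa using hx
    · simpa [hy] using hg y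
  -- Let `y` be mapped to `p` once `q` is redirected to `p'`. If `y ≠ q`, then redirecting `q` to
  -- `p` instead would identify `y` and `q`.
  have hsurj := Finite.injective_iff_surjective.1 (injective_of_minimal hS (hupdate p' hp'))
  obtain ⟨y, hy⟩ := hsurj p
  obtain rfl | hyq := eq_or_ne y q
  · simpa using hy.symm
  · refine absurd (injective_of_minimal hS (hupdate p hp) (a₁ := y) (a₂ := q) ?_) hyq
    simpa [hyq] using hy

theorem exists_perm_isCycleOn_of_minimal (hS : Minimal (Sourceless r) S) :
    ∃ f : Equiv.Perm S, f.IsCycleOn Set.univ ∧ ∀ p q : S, r p q ↔ p = f q := by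
  classical
  choose g hg using hS.prop.exists_pred
  let f : Equiv.Perm S :=
    Equiv.ofBijective g (Finite.injective_iff_bijective.1 (injective_of_minimal hS hg))
  have hsameCycle (x y : S) : f.SameCycle x y := by
    have horbit : Finset.univ.filter (f.SameCycle x) = Finset.univ :=
      eq_univ_of_minimal hS ⟨x, by simp [Equiv.Perm.SameCycle.refl]⟩
        fun q hq ↦ ⟨f q, by simpa using hq, hg q⟩
    simpa using horbit.ge (Finset.mem_univ y)
  refine ⟨f, ⟨Set.bijOn_univ.2 f.bijective, fun x _ y _ ↦ hsameCycle x y⟩, fun p q ↦ ?_⟩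
  exact ⟨fun hpq ↦ pred_unique_of_minimal hS hpq (hg q), fun hpq ↦ hpq ▸ hg q⟩

end Sourceless

theorem exists_sourceless_of_not_wellFounded {ι : Type*} [Finite ι] {r : ι → ι → Prop}
    (hr : ¬ WellFounded r) : ∃ S, Sourceless r S := by
  simp only [WellFounded.wellFounded_iff_has_min, not_forall, not_exists, not_and,
    not_not] at hr
  obtain ⟨s, hs, hpred⟩ := hr
  lift s to Finset ι using s.toFinite
  exact ⟨s, Finset.coe_nonempty.1 hs, by simpa using hpred⟩

theorem exists_isCycleOn_of_not_wellFounded {ι : Type*} [Finite ι] {r : ι → ι → Prop}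
    (hr : ¬ WellFounded r) :
    ∃ (S : Finset ι) (f : Equiv.Perm S), S.Nonempty ∧ f.IsCycleOn Set.univ ∧
      ∀ p q : S, r p q ↔ p = f q := by
  obtain ⟨S, hS⟩ :=
    exists_minimal_of_wellFoundedLT _ (exists_sourceless_of_not_wellFounded hr)
  obtain ⟨f, hf⟩ := Sourceless.exists_perm_isCycleOn_of_minimal hS
  exact ⟨S, f, hS.prop.1, hf⟩

end ChordlessCycle

section Determinant

theorem perm_eq_one_or_eq_of_isCycleOn {α : Type*} [Finite α] {f σ : Equiv.Perm α}
    (hf : f.IsCycleOn Set.univ) (hσ : ∀ i, σ i = i ∨ σ i = f i) : σ = 1 ∨ σ = f := by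
  refine or_iff_not_imp_left.2 fun hne ↦ ?_
  obtain ⟨x, hx⟩ : ∃ x, σ x ≠ x := by simpa [Equiv.ext_iff] using hne
  have hmoved (m : ℕ) : σ ((f ^ m) x) ≠ (f ^ m) x := by
    induction m with
    | zero => simpa using hx
    | succ m ih =>
      have hstep : σ ((f ^ m) x) = (f ^ (m + 1)) x := by
        rw [pow_succ', Equiv.Perm.mul_apply]
        exact (hσ _).resolve_left ih
      rwa [← hstep, σ.injective.ne_iff]
  ext y
  obtain ⟨m, rfl⟩ := (hf.2 (Set.mem_univ x) (Set.mem_univ y)).exists_nat_pow_eq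
  exact (hσ _).resolve_left (hmoved m)

theorem det_eq_prod_add_sign_smul_prod_of_isCycleOn {α R : Type*} [Fintype α] [DecidableEq α]
    [CommRing R] {f : Equiv.Perm α} (hf : f.IsCycleOn Set.univ) (hf_ne_one : f ≠ 1)
    {M : Matrix α α R} (hM : ∀ p q, p ≠ q → p ≠ f q → M p q = 0) :
    M.det = ∏ i, M i i + Equiv.Perm.sign f • ∏ i, M (f i) i := by
  rw [Matrix.det_apply, ← Finset.sum_subset (Finset.subset_univ {1, f}),
    Finset.sum_pair hf_ne_one.symm]
  · simp
  · intro σ _ hσ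
    simp only [Finset.mem_insert, Finset.mem_singleton] at hσ
    obtain ⟨i, hi, hfi⟩ : ∃ i, σ i ≠ i ∧ σ i ≠ f i := by
      simpa using mt (perm_eq_one_or_eq_of_isCycleOn hf) hσ
    have hprod : ∏ i, M (σ i) i = 0 :=
      Finset.prod_eq_zero (Finset.mem_univ i) (hM (σ i) i hi hfi)
    rw [hprod, smul_zero]

end Determinant

theorem exists_equiv_fin_of_wellFounded {ι : Type*} [Fintype ι] {k : ℕ}
    (hk : Fintype.card ι = k) {r : ι → ι → Prop} (hr : WellFounded r) :
    ∃ σ : Fin k ≃ ι, ∀ p q, r (σ p) (σ q) → p < q := by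
  have : IsWellFounded ι r := ⟨hr⟩
  obtain ⟨s, hrs, hs⟩ := IsWellFounded.exists_well_order_ge r
  classical
  let _ : LinearOrder ι := linearOrderOfSTO s
  let σ := Fintype.orderIsoFinOfCardEq ι hk
  exact ⟨σ.toEquiv, fun p q hpq ↦ σ.lt_iff_lt.1 (hrs _ _ hpq)⟩

section BlockMatrix

variable {ι R : Type*} {β : ι → Type*} [CommRing R]

/-- The digraph of a matrix `a` with rows `ι` and one block of columns `β q` for each `q : ι`:
there is an edge from `p` to `q ≠ p` when row `p` of the `q`-th block is nonzero. -/
def BlockAdj (a : ι → (q : ι) → β q → R) (p q : ι) : Prop :=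
  p ≠ q ∧ ∃ m, a p q m ≠ 0

/-- Every principal minor of every square matrix obtained from `a` by choosing one column from each
block equals `1`. -/
def PrincipalMinorsEqOne [DecidableEq ι] (a : ι → (q : ι) → β q → R) : Prop :=
  ∀ (j : (q : ι) → β q) (S : Finset ι),
    (Matrix.of fun p q : {x // x ∈ S} ↦ a p q (j q)).det = 1

namespace PrincipalMinorsEqOne

variable [DecidableEq ι] [∀ q, Nonempty (β q)] {a : ι → (q : ι) → β q → R}

theorem diag_eq_one (ha : PrincipalMinorsEqOne a) (p : ι) (m : β p) : a p p m = 1 := by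
  obtain ⟨j, rfl⟩ := Function.surjective_eval p m
  have hdet := ha j {p}
  rwa [Matrix.det_eq_elem_of_subsingleton _ ⟨p, Finset.mem_singleton_self p⟩] at hdet

theorem wellFounded_blockAdj [Finite ι] [IsDomain R] (ha : PrincipalMinorsEqOne a) :
    WellFounded (BlockAdj a) := by
  by_contra hcyclic
  obtain ⟨S, f, ⟨x, hx⟩, hf, hadj⟩ := exists_isCycleOn_of_not_wellFounded hcyclic
  have hedge (q : S) : BlockAdj a (f q) q := (hadj _ _).2 rfl
  have hf_ne_one : f ≠ 1 := by
    rintro rfl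
    exact (hedge ⟨x, hx⟩).1 rfl
  obtain ⟨j, hj⟩ : ∃ j : (q : ι) → β q, ∀ q : S, a (f q) q (j q) ≠ 0 := by
    have hcolumn (q : ι) : ∃ m : β q, ∀ hq : q ∈ S, a (f ⟨q, hq⟩) q m ≠ 0 := by
      by_cases hq : q ∈ S
      · obtain ⟨m, hm⟩ := (hedge ⟨q, hq⟩).2
        exact ⟨m, fun _ ↦ hm⟩
      · exact ⟨Classical.arbitrary _, fun h ↦ absurd h hq⟩
    choose j hj using hcolumn
    exact ⟨j, fun q ↦ hj q q.2⟩
  let M : Matrix S S R := Matrix.of fun p q ↦ a p q (j q)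
  have hchordless (p q : S) (hpq : p ≠ q) (hpf : p ≠ f q) : M p q = 0 := by
    by_contra hne
    exact hpf ((hadj p q).1 ⟨Subtype.coe_ne_coe.2 hpq, j q, hne⟩)
  have hdiag : ∏ q, M q q = 1 := Finset.prod_eq_one fun q _ ↦ ha.diag_eq_one (q : ι) (j q)
  have hdet : ∏ q, M q q + Equiv.Perm.sign f • ∏ q, M (f q) q = 1 :=
    (det_eq_prod_add_sign_smul_prod_of_isCycleOn hf hf_ne_one hchordless).symm.trans (ha j S)
  rw [hdiag, add_eq_left, smul_eq_zero_iff_eq] at hdet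
  exact Finset.prod_ne_zero_iff.2 (fun q _ ↦ hj q) hdet

end PrincipalMinorsEqOne

end BlockMatrix

theorem stmt_1_general {ι R : Type*} [Fintype ι] [DecidableEq ι] [CommRing R] [IsDomain R]
    {k : ℕ} (hk : Fintype.card ι = k) {β : ι → Type*} [∀ q, Nonempty (β q)]
    {a : ι → (q : ι) → β q → R} (ha : PrincipalMinorsEqOne a) :
    ∃ σ : Fin k ≃ ι,
      (∀ p q : Fin k, q < p → ∀ m, a (σ p) (σ q) m = 0) ∧ ∀ p m, a (σ p) (σ p) m = 1 := by
  obtain ⟨σ, hσ⟩ := exists_equiv_fin_of_wellFounded hk ha.wellFounded_blockAdj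
  refine ⟨σ, fun p q hqp m ↦ ?_, fun p ↦ ha.diag_eq_one (σ p)⟩
  by_contra hne
  exact hqp.not_gt (hσ p q ⟨σ.injective.ne hqp.ne', m, hne⟩)

/-- If every principal minor of every matrix `A_{j_1 ⋯ j_k}` (obtained by
choosing one column `j q` from each block `q`) equals `1`, then there is a permutation `σ` of
`{1, …, k}` such that the simultaneously row- and block-permuted matrix
`b p q m = a (σ p) (σ q) m` is unipotent upper triangular: `b p q m = 0` for `p > q`, and
`b p p m = 1` for all `p` and all `m`. -/
theorem stmt_1 (k : ℕ) (hk : 1 ≤ k) (n : Fin k → ℕ) (hn : ∀ i, 1 ≤ n i)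
    (a : Fin k → (i : Fin k) → Fin (n i) → ZMod 2)
    (hminor : ∀ j : (q : Fin k) → Fin (n q), ∀ S : Finset (Fin k),
      (Matrix.of (fun p q : {x // x ∈ S} => a p.1 q.1 (j q.1))).det = 1) :
    ∃ σ : Equiv.Perm (Fin k),
      (∀ p q : Fin k, q < p → ∀ m : Fin (n (σ q)), a (σ p) (σ q) m = 0) ∧
      (∀ p : Fin k, ∀ m : Fin (n (σ p)), a (σ p) (σ p) m = 1) := by
  have (i : Fin k) : Nonempty (Fin (n i)) := ⟨⟨0, hn i⟩⟩
  exact stmt_1_general (Fintype.card_fin k) hminor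
end

section
/- Suppose A is in unipotent upper triangular form. Then the formula (g_1, …, g_k) · ((x_0^1, …, x_{n_1}^1), …, (x_0^k, …, x_{n_k}^k)) = ((g_1 x_0^1, (∏_{j=1}^k g_j^{a_{j,1}^1}) x_1^1, …, (∏_{j=1}^k g_j^{a_{j,n_1}^1}) x_{n_1}^1), …, (g_k x_0^k, (∏_{j=1}^k g_j^{a_{j,1}^k}) x_1^k, …, (∏_{j=1}^k g_j^{a_{j,n_k}^k}) x_{n_k}^k)), where the exponents a_{j,m}^i ∈ 𝔽₂ are read as integers 0 or 1, defines an action of the group {±1}^k on the product of unit spheres S^{n_1} × ⋯ × S^{n_k} (with S^{n_i} ⊆ ℝ^{n_i + 1}), and this action is free. -/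
/-- The formula from the paper: `(g_1, …, g_k)` acts on the product `∏ i, ℝ^{n_i + 1}` by
multiplying the coordinate `x_0^i` by `g_i` and the coordinate `x_m^i` (`1 ≤ m ≤ n_i`) by
`∏_j g_j ^ (a_{j,m}^i)`, the exponents in `𝔽₂` being read as integers `0` or `1`.
Here the group `{±1}^k` is realized as `Fin k → ℤˣ`. -/
def bottAct (k : ℕ) (n : Fin k → ℕ) (a : Fin k → (i : Fin k) → Fin (n i) → ZMod 2)
    (g : Fin k → ℤˣ) (x : (i : Fin k) → Fin (n i + 1) → ℝ) :
    (i : Fin k) → Fin (n i + 1) → ℝ :=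
  fun i => Fin.cases (((g i : ℤ) : ℝ) * x i 0)
    (fun m : Fin (n i) =>
      (∏ j : Fin k, ((g j : ℤ) : ℝ) ^ (a j i m).val) * x i m.succ)

/-!
Every coordinate of `x` is multiplied by a monomial in the signs `g_j`, so `g ↦ bottAct k n a g` is
a diagonal action by characters with values `±1`, and it preserves all squares. If `g` fixes a point
`x` of the product of spheres, choose in each block `i` a nonzero coordinate of `x`: its monomial
takes the value `1` at `g`. The `k` exponent vectors so chosen form a unipotent triangular matrix,
even where the chosen coordinate is `x_0^i`, whose exponent vector is the `i`-th unit vector, and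
forward substitution gives `g_1 = 1`, `g_2 = 1`, and so on.
-/

section Monomial

variable {ι M : Type*} [Fintype ι] [CommMonoid M]

/-- The monomial `g ↦ ∏ j, g j ^ e j` with exponent vector `e`, as a homomorphism. -/
def monomialHom (e : ι → ℕ) : (ι → M) →* M where
  toFun g := ∏ j, g j ^ e j
  map_one' := by simp
  map_mul' g h := by simp [mul_pow, Finset.prod_mul_distrib]

lemma monomialHom_apply (e : ι → ℕ) (g : ι → M) : monomialHom e g = ∏ j, g j ^ e j := rfl

lemma monomialHom_single [DecidableEq ι] (i : ι) (g : ι → M) :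
    monomialHom (Pi.single i 1) g = g i := by
  simp [monomialHom_apply, Pi.single_apply]

lemma monomialHom_eq_apply_of_forall_lt_eq_one [LinearOrder ι] {e : ι → ℕ} {g : ι → M} {i : ι}
    (hgt : ∀ j, i < j → e j = 0) (hdiag : e i = 1) (hg : ∀ j < i, g j = 1) :
    monomialHom e g = g i := by
  have hother : ∀ j, j ≠ i → g j ^ e j = 1 := fun j hj ↦ by
    rcases hj.lt_or_gt with hlt | hlt
    · rw [hg j hlt, one_pow]
    · rw [hgt j hlt, pow_zero]
  rw [monomialHom_apply, Fintype.prod_eq_single i hother, hdiag, pow_one]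

theorem eq_one_of_unipotent_monomialHom_eq_one [LinearOrder ι] {e : ι → ι → ℕ} {g : ι → M}
    (hgt : ∀ i j, i < j → e i j = 0) (hdiag : ∀ i, e i i = 1)
    (h : ∀ i, monomialHom (e i) g = 1) : g = 1 := by
  funext i
  induction i using WellFoundedLT.induction with
  | ind i ih =>
    exact (monomialHom_eq_apply_of_forall_lt_eq_one (hgt i) (hdiag i) ih).symm.trans (h i)

end Monomial

section BottAct

variable {k : ℕ} {n : Fin k → ℕ} (a : Fin k → (i : Fin k) → Fin (n i) → ZMod 2)

/-- The exponent vector of the monomial by which `bottAct` multiplies the coordinate `x_m^i`: the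
column of `A` at `(i, m)`, with its entries read as `0` or `1`, or the `i`-th unit vector when
`m = 0`. -/
def bottExponent (i : Fin k) : Fin (n i + 1) → Fin k → ℕ :=
  Fin.cases (Pi.single i 1) fun m j ↦ (a j i m).val

lemma bottAct_apply (g : Fin k → ℤˣ) (x : (i : Fin k) → Fin (n i + 1) → ℝ) (i : Fin k)
    (m : Fin (n i + 1)) :
    bottAct k n a g x i m = monomialHom (bottExponent a i m) g • x i m := by
  cases m using Fin.cases with
  | zero => simp [bottAct, bottExponent, monomialHom_single, Units.smul_def]
  | succ m => simp [bottAct, bottExponent, monomialHom_apply, Units.smul_def]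

lemma bottAct_one (x : (i : Fin k) → Fin (n i + 1) → ℝ) : bottAct k n a 1 x = x := by
  ext i m
  rw [bottAct_apply, map_one, one_smul]

lemma bottAct_mul (g h : Fin k → ℤˣ) (x : (i : Fin k) → Fin (n i + 1) → ℝ) :
    bottAct k n a (g * h) x = bottAct k n a g (bottAct k n a h x) := by
  ext i m
  simp only [bottAct_apply, map_mul, mul_smul]

lemma bottAct_apply_sq (g : Fin k → ℤˣ) (x : (i : Fin k) → Fin (n i + 1) → ℝ) (i : Fin k)
    (m : Fin (n i + 1)) : bottAct k n a g x i m ^ 2 = x i m ^ 2 := by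
  rw [bottAct_apply, smul_pow, Int.units_sq, one_smul]

variable {a}

lemma monomialHom_bottExponent_eq_one {g : Fin k → ℤˣ} {x : (i : Fin k) → Fin (n i + 1) → ℝ}
    (hfix : bottAct k n a g x = x) {i : Fin k} {m : Fin (n i + 1)} (hx : x i m ≠ 0) :
    monomialHom (bottExponent a i m) g = 1 := by
  have hsmul : monomialHom (bottExponent a i m) g • x i m = x i m := by
    rw [← bottAct_apply, hfix]
  exact Units.ext (smul_left_injective ℤ hx (hsmul.trans (one_smul ℤ _).symm))

lemma bottExponent_eq_zero_of_lt (hUT : ∀ j i : Fin k, i < j → ∀ m : Fin (n i), a j i m = 0)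
    {i j : Fin k} (hij : i < j) (m : Fin (n i + 1)) : bottExponent a i m j = 0 := by
  cases m using Fin.cases with
  | zero => exact Pi.single_eq_of_ne hij.ne' 1
  | succ m => exact (ZMod.val_eq_zero _).mpr (hUT j i hij m)

lemma bottExponent_self (hdiag : ∀ (i : Fin k) (m : Fin (n i)), a i i m = 1) (i : Fin k)
    (m : Fin (n i + 1)) : bottExponent a i m i = 1 := by
  cases m using Fin.cases with
  | zero => exact Pi.single_eq_same i 1
  | succ m => exact congrArg ZMod.val (hdiag i m)

theorem eq_one_of_bottAct_eq_self (hUT : ∀ j i : Fin k, i < j → ∀ m : Fin (n i), a j i m = 0)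
    (hdiag : ∀ (i : Fin k) (m : Fin (n i)), a i i m = 1) {g : Fin k → ℤˣ}
    {x : (i : Fin k) → Fin (n i + 1) → ℝ} (hx : ∀ i, x i ≠ 0) (hfix : bottAct k n a g x = x) :
    g = 1 := by
  choose m hm using fun i ↦ Function.ne_iff.mp (hx i)
  exact eq_one_of_unipotent_monomialHom_eq_one (e := fun i ↦ bottExponent a i (m i))
    (fun i _ hij ↦ bottExponent_eq_zero_of_lt hUT hij (m i))
    (fun i ↦ bottExponent_self hdiag i (m i))
    (fun i ↦ monomialHom_bottExponent_eq_one hfix (hm i))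

end BottAct

/-- If `A` is in unipotent upper triangular form, then the formula `bottAct`
defines an action of the group `{±1}^k ≃ (Fin k → ℤˣ)` on the product of unit spheres
`S^{n_1} × ⋯ × S^{n_k} ⊆ ∏ i, ℝ^{n_i + 1}` (it satisfies the two action axioms and maps the
product of spheres into itself), and this action is free. -/
theorem stmt_2 (k : ℕ) (hk : 1 ≤ k) (n : Fin k → ℕ) (hn : ∀ i, 1 ≤ n i)
    (a : Fin k → (i : Fin k) → Fin (n i) → ZMod 2)
    (hUT : ∀ j i : Fin k, i < j → ∀ m : Fin (n i), a j i m = 0)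
    (hdiag : ∀ i : Fin k, ∀ m : Fin (n i), a i i m = 1) :
    (∀ x : (i : Fin k) → Fin (n i + 1) → ℝ, bottAct k n a 1 x = x) ∧
    (∀ g h : Fin k → ℤˣ, ∀ x : (i : Fin k) → Fin (n i + 1) → ℝ,
      bottAct k n a (g * h) x = bottAct k n a g (bottAct k n a h x)) ∧
    (∀ g : Fin k → ℤˣ, ∀ x : (i : Fin k) → Fin (n i + 1) → ℝ,
      (∀ i : Fin k, ∑ m : Fin (n i + 1), (x i m) ^ 2 = 1) →
      (∀ i : Fin k, ∑ m : Fin (n i + 1), (bottAct k n a g x i m) ^ 2 = 1)) ∧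
    (∀ g : Fin k → ℤˣ, ∀ x : (i : Fin k) → Fin (n i + 1) → ℝ,
      (∀ i : Fin k, ∑ m : Fin (n i + 1), (x i m) ^ 2 = 1) →
      bottAct k n a g x = x → g = 1) := by
  refine ⟨bottAct_one a, bottAct_mul a, fun g x hx i ↦ ?_, fun g x hx hfix ↦ ?_⟩
  · simpa only [bottAct_apply_sq] using hx i
  · have hne : ∀ i, x i ≠ 0 := fun i hi ↦ by simpa [hi] using hx i
    exact eq_one_of_bottAct_eq_self hUT hdiag hne hfix
end

section
/- The group Γ is abelian if and only if a_{p,1}^q = 0 for all pairs 1 ≤ p < q ≤ k with q > l. -/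
/-- The set of relators of the group `Γ` (on generators `α_0, …, α_{k-1}`, 0-indexed) from the
presentation of the fundamental group of a generalized real Bott manifold.  Here `l` plays the
role of the number of blocks of size at least two, and `a p q` is the entry `a_{p,1}^q`.
(Indices are 0-based: the paper's generator `α_j` corresponds to index `j - 1`.) -/
def gbmRels (k l : ℕ) (a : Fin k → Fin k → ZMod 2) : Set (FreeGroup (Fin k)) :=
  {r | (∃ p : Fin k, (p : ℕ) < l ∧ r = (FreeGroup.of p) ^ 2) ∨
       (∃ p q : Fin k, p < q ∧ (q : ℕ) < l ∧ r = (FreeGroup.of p * FreeGroup.of q) ^ 2) ∨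
       (∃ p q : Fin k, p < q ∧ l ≤ (p : ℕ) ∧
         r = (if a p q = 0 then
                FreeGroup.of p * FreeGroup.of q * (FreeGroup.of p)⁻¹ * (FreeGroup.of q)⁻¹
              else
                FreeGroup.of p * (FreeGroup.of q)⁻¹ * (FreeGroup.of p)⁻¹ * (FreeGroup.of q)⁻¹)) ∨
       (∃ p q : Fin k, p < q ∧ (p : ℕ) < l ∧ l ≤ (q : ℕ) ∧
         r = (if a p q = 0 then
                FreeGroup.of p * FreeGroup.of q * FreeGroup.of p * (FreeGroup.of q)⁻¹
              else
                (FreeGroup.of p * FreeGroup.of q) ^ 2))}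

/-!
Each defining relation says that a generator of index `p < l` is an involution, or that `α_p`
conjugates `α_q` to `α_q` or to `α_q⁻¹` for `p < q`, the latter exactly when `l ≤ q` and
`a p q ≠ 0`; for `q < l` the two cases agree.
If inversion never occurs, then the generators commute. Conversely, fix `q ≥ l`: sending `α_q` to
the unit translation of `ℤ`, the `α_p` with `p < q` and `a p q ≠ 0` to the reflection `x ↦ -x`,
and all other generators to the identity respects the relations, and in the infinite dihedral
group the reflection does not commute with the translation.
-/

section Group

variable {G : Type*} [Group G]

theorem mul_comm_iff_pairwise_commute {ι : Type*} {f : ι → G}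
    (hf : Subgroup.closure (Set.range f) = ⊤) :
    (∀ x y : G, x * y = y * x) ↔ Pairwise (Function.onFun Commute f) := by
  refine ⟨fun h i j _ ↦ h (f i) (f j), fun h x y ↦ ?_⟩
  have range_comm : ∀ x ∈ Set.range f, ∀ y ∈ Set.range f, x * y = y * x := by
    rintro _ ⟨i, rfl⟩ _ ⟨j, rfl⟩
    obtain rfl | hij := eq_or_ne i j
    · rfl
    · exact h hij
  have := Subgroup.isMulCommutative_closure range_comm
  have mem_closure (z : G) : z ∈ Subgroup.closure (Set.range f) := hf ▸ Subgroup.mem_top z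
  exact setLike_mul_comm (mem_closure x) (mem_closure y)

theorem conj_mul_inv_eq_one_iff_semiconjBy {x y z : G} :
    x * y * x⁻¹ * z⁻¹ = 1 ↔ SemiconjBy x y z := by
  rw [mul_inv_eq_one, mul_inv_eq_iff_eq_mul, SemiconjBy]

theorem conj_inv_mul_inv_eq_one_iff_semiconjBy {x y : G} :
    x * y⁻¹ * x⁻¹ * y⁻¹ = 1 ↔ SemiconjBy x y y⁻¹ := by
  rw [conj_mul_inv_eq_one_iff_semiconjBy, ← SemiconjBy.inv_right_iff, inv_inv]

theorem mul_mul_mul_inv_eq_one_iff_commute {x y : G} (hx : x⁻¹ = x) :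
    x * y * x * y⁻¹ = 1 ↔ Commute x y := by
  rw [Commute, ← conj_mul_inv_eq_one_iff_semiconjBy, hx]

theorem mul_sq_eq_one_iff_semiconjBy_inv {x y : G} (hx : x⁻¹ = x) :
    (x * y) ^ 2 = 1 ↔ SemiconjBy x y y⁻¹ := by
  rw [← conj_mul_inv_eq_one_iff_semiconjBy, hx, inv_inv, sq, mul_assoc (x * y)]

theorem sq_eq_one_iff_inv_eq_self {x : G} : x ^ 2 = 1 ↔ x⁻¹ = x := by
  rw [sq, inv_eq_iff_mul_eq_one]

end Group

section Relations

variable {k l : ℕ} {G : Type*} [Group G]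

/-- The defining relations of `Γ` for a family `f` of elements of an arbitrary group, in conjugation
form: for `p < q`, `f p` commutes with `f q` or conjugates it to its inverse. Two involutions of
index less than `l` are covered by `commute`. -/
structure SatisfiesGBMRelations (l : ℕ) (a : Fin k → Fin k → ZMod 2) (f : Fin k → G) : Prop where
  inv_eq_self : ∀ p : Fin k, (p : ℕ) < l → (f p)⁻¹ = f p
  commute : ∀ p q : Fin k, p < q → (l ≤ (q : ℕ) → a p q = 0) → Commute (f p) (f q)
  semiconjBy_inv : ∀ p q : Fin k, p < q → l ≤ (q : ℕ) → a p q ≠ 0 →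
    SemiconjBy (f p) (f q) (f q)⁻¹

variable {a : Fin k → Fin k → ZMod 2} {f : Fin k → G}

theorem SatisfiesGBMRelations.of_lift_eq_one
    (h : ∀ r ∈ gbmRels k l a, FreeGroup.lift f r = 1) : SatisfiesGBMRelations l a f := by
  have inv_eq_self (p : Fin k) (hp : (p : ℕ) < l) : (f p)⁻¹ = f p := by
    simpa [sq_eq_one_iff_inv_eq_self] using h _ (.inl ⟨p, hp, rfl⟩)
  refine ⟨inv_eq_self, fun p q hpq ha ↦ ?_, fun p q hpq hq ha ↦ ?_⟩
  · rcases lt_or_ge (q : ℕ) l with hq | hq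
    · have hsq : (f p * f q) ^ 2 = 1 := by simpa using h _ (.inr (.inl ⟨p, q, hpq, hq, rfl⟩))
      rw [mul_sq_eq_one_iff_semiconjBy_inv (inv_eq_self p (lt_trans hpq hq)),
        inv_eq_self q hq] at hsq
      exact hsq
    rcases lt_or_ge (p : ℕ) l with hp | hp
    · rw [← mul_mul_mul_inv_eq_one_iff_commute (inv_eq_self p hp)]
      simpa [ha hq] using h _ (.inr (.inr (.inr ⟨p, q, hpq, hp, hq, rfl⟩)))
    · rw [Commute, ← conj_mul_inv_eq_one_iff_semiconjBy]
      simpa [ha hq] using h _ (.inr (.inr (.inl ⟨p, q, hpq, hp, rfl⟩)))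
  · rcases lt_or_ge (p : ℕ) l with hp | hp
    · rw [← mul_sq_eq_one_iff_semiconjBy_inv (inv_eq_self p hp)]
      simpa [ha] using h _ (.inr (.inr (.inr ⟨p, q, hpq, hp, hq, rfl⟩)))
    · rw [← conj_inv_mul_inv_eq_one_iff_semiconjBy]
      simpa [ha] using h _ (.inr (.inr (.inl ⟨p, q, hpq, hp, rfl⟩)))

theorem SatisfiesGBMRelations.lift_eq_one (h : SatisfiesGBMRelations l a f) :
    ∀ r ∈ gbmRels k l a, FreeGroup.lift f r = 1 := by
  rintro r (⟨p, hp, rfl⟩ | ⟨p, q, hpq, hq, rfl⟩ | ⟨p, q, hpq, hp, rfl⟩ | ⟨p, q, hpq, hp, hq, rfl⟩)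
  · simpa [sq_eq_one_iff_inv_eq_self] using h.inv_eq_self p hp
  · have hsq := mul_sq_eq_one_iff_semiconjBy_inv (y := f q) (h.inv_eq_self p (lt_trans hpq hq))
    rw [h.inv_eq_self q hq] at hsq
    simpa using hsq.2 (h.commute p q hpq fun hlq ↦ absurd hq hlq.not_gt)
  · have hq : l ≤ (q : ℕ) := hp.trans hpq.le
    split_ifs with ha
    · simpa using conj_mul_inv_eq_one_iff_semiconjBy.2 (h.commute p q hpq fun _ ↦ ha)
    · simpa using conj_inv_mul_inv_eq_one_iff_semiconjBy.2 (h.semiconjBy_inv p q hpq hq ha)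
  · have hinv := h.inv_eq_self p hp
    split_ifs with ha
    · simpa using (mul_mul_mul_inv_eq_one_iff_commute hinv).2 (h.commute p q hpq fun _ ↦ ha)
    · simpa using (mul_sq_eq_one_iff_semiconjBy_inv hinv).2 (h.semiconjBy_inv p q hpq hq ha)

theorem satisfiesGBMRelations_of (a : Fin k → Fin k → ZMod 2) :
    SatisfiesGBMRelations l a (PresentedGroup.of (rels := gbmRels k l a)) := by
  refine .of_lift_eq_one fun r hr ↦ ?_
  have lift_of : FreeGroup.lift PresentedGroup.of = PresentedGroup.mk (gbmRels k l a) := by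
    ext p; simp [PresentedGroup.of]
  rw [lift_of, PresentedGroup.one_of_mem hr]

end Relations

section Dihedral

open DihedralGroup

theorem semiconjBy_sr_r_inv {n : ℕ} (i j : ZMod n) : SemiconjBy (sr i) (r j) (r j)⁻¹ := by
  simp [SemiconjBy]

theorem not_commute_sr_zero_r_one : ¬ Commute (sr 0 : DihedralGroup 0) (r 1) := by
  simp [Commute, SemiconjBy]

/-- The image of the `p`-th generator under the homomorphism from `Γ` to the infinite dihedral group
that detects the entries `a p q` for fixed `q`. Here `DihedralGroup 0` is the isometry group of `ℤ`,
with `r 1` the unit translation and `sr 0` the reflection in the origin. -/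
def dihedralImage {k : ℕ} (a : Fin k → Fin k → ZMod 2) (q p : Fin k) : DihedralGroup 0 :=
  if p = q then r 1 else if p < q ∧ a p q ≠ 0 then sr 0 else 1

variable {k l : ℕ} {a : Fin k → Fin k → ZMod 2} {p q : Fin k}

theorem dihedralImage_self : dihedralImage a q q = r 1 := if_pos rfl

theorem dihedralImage_of_lt_of_ne_zero (hpq : p < q) (ha : a p q ≠ 0) :
    dihedralImage a q p = sr 0 := by
  simp [dihedralImage, hpq, hpq.ne, ha]

theorem dihedralImage_of_lt_of_eq_zero (hpq : p < q) (ha : a p q = 0) :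
    dihedralImage a q p = 1 := by
  simp [dihedralImage, hpq.ne, ha]

theorem dihedralImage_of_gt (hqp : q < p) : dihedralImage a q p = 1 := by
  simp [dihedralImage, hqp.ne', hqp.not_gt]

theorem dihedralImage_of_ne (hpq : p ≠ q) :
    dihedralImage a q p = sr 0 ∨ dihedralImage a q p = 1 := by
  rw [dihedralImage, if_neg hpq]
  exact ite_eq_or_eq ..

theorem inv_dihedralImage_of_ne (hpq : p ≠ q) :
    (dihedralImage a q p)⁻¹ = dihedralImage a q p := by
  rcases dihedralImage_of_ne (a := a) hpq with h | h <;> simp [h]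

theorem commute_dihedralImage_of_ne {p' : Fin k} (hp : p ≠ q) (hp' : p' ≠ q) :
    Commute (dihedralImage a q p) (dihedralImage a q p') := by
  rcases dihedralImage_of_ne (a := a) hp with h | h <;>
    rcases dihedralImage_of_ne (a := a) hp' with h' | h' <;> simp [h, h']

theorem satisfiesGBMRelations_dihedralImage (hq : l ≤ (q : ℕ)) :
    SatisfiesGBMRelations l a (dihedralImage a q) where
  inv_eq_self p hp := inv_dihedralImage_of_ne (by rintro rfl; exact hp.not_ge hq)
  commute p p' hpp' ha := by
    rcases lt_trichotomy p' q with hlt | rfl | hgt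
    · exact commute_dihedralImage_of_ne (hpp'.trans hlt).ne hlt.ne
    · rw [dihedralImage_of_lt_of_eq_zero hpp' (ha hq)]
      exact .one_left _
    · rw [dihedralImage_of_gt hgt]
      exact .one_right _
  semiconjBy_inv p p' hpp' _ ha := by
    rcases lt_trichotomy p' q with hlt | rfl | hgt
    · rw [inv_dihedralImage_of_ne hlt.ne]
      exact commute_dihedralImage_of_ne (hpp'.trans hlt).ne hlt.ne
    · rw [dihedralImage_of_lt_of_ne_zero hpp' ha, dihedralImage_self]
      exact semiconjBy_sr_r_inv 0 1
    · simp [dihedralImage_of_gt hgt]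

end Dihedral

theorem commute_generators_iff {k l : ℕ} (a : Fin k → Fin k → ZMod 2) {p q : Fin k} (hpq : p < q) :
    Commute (PresentedGroup.of p : PresentedGroup (gbmRels k l a)) (PresentedGroup.of q) ↔
      (l ≤ (q : ℕ) → a p q = 0) := by
  refine ⟨fun hcomm hq ↦ ?_, (satisfiesGBMRelations_of a).commute p q hpq⟩
  by_contra ha
  have himage := hcomm.map
    (PresentedGroup.toGroup (satisfiesGBMRelations_dihedralImage hq).lift_eq_one)
  rw [PresentedGroup.toGroup.of, PresentedGroup.toGroup.of, dihedralImage_self,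
    dihedralImage_of_lt_of_ne_zero hpq ha] at himage
  exact not_commute_sr_zero_r_one himage

/-- The group `Γ` is abelian if and only if `a_{p,1}^q = 0` for all pairs
`1 ≤ p < q ≤ k` with `q > l`. -/
theorem stmt_6 (k l : ℕ) (hk : 1 ≤ k) (hl : l ≤ k) (a : Fin k → Fin k → ZMod 2) :
    (∀ x y : PresentedGroup (gbmRels k l a), x * y = y * x) ↔
      (∀ p q : Fin k, p < q → l ≤ (q : ℕ) → a p q = 0) := by
  rw [mul_comm_iff_pairwise_commute (PresentedGroup.closure_range_of _), Std.Symm.pairwise_on]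
  exact forall₂_congr fun p q ↦ forall_congr' fun hpq ↦ commute_generators_iff a hpq
end

section
/- The commutator subgroup [Γ, Γ] is abelian. In particular Γ is a solvable group. -/
section Group

open Subgroup hiding commutator commutator_def
open scoped commutatorElement

variable {G : Type*} [Group G]

/-- Conjugation by `g` sends `h` to `h` or to `h⁻¹`. In the group presented by `gbmRels` this holds
for `g = α_p` and `h = α_q` whenever `p < q`, and it is all that the proof uses of the relators. -/
def CentralizesOrInverts (g h : G) : Prop :=
  Commute g h ∨ SemiconjBy g h h⁻¹

namespace CentralizesOrInverts

variable {g h : G}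

protected lemma refl (g : G) : CentralizesOrInverts g g :=
  .inl (.refl g)

lemma commute_sq (H : CentralizesOrInverts g h) : Commute (g ^ 2) h := by
  rcases H with hcomm | hinv
  · exact hcomm.pow_left 2
  · have hsq : SemiconjBy (g * g) h h⁻¹⁻¹ := hinv.inv_right.mul_left hinv
    rwa [inv_inv, ← sq] at hsq

lemma pow_right (H : CentralizesOrInverts g h) (n : ℕ) : CentralizesOrInverts g (h ^ n) :=
  H.imp (·.pow_right n) fun hinv ↦ by simpa only [inv_pow] using SemiconjBy.pow_right hinv n

lemma mem_normalizer_zpowers (H : CentralizesOrInverts g h) : g ∈ normalizer (zpowers h) := by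
  rw [mem_normalizer_iff_map_conj_eq, MonoidHom.map_zpowers]
  rcases H with hcomm | hinv
  · simp [hcomm.eq]
  · simp [hinv.eq]

lemma commutatorElement_mem_zpowers_sq (H : CentralizesOrInverts g h) :
    ⁅g, h⁆ ∈ zpowers (h ^ 2) := by
  rcases H with hcomm | hinv
  · exact hcomm.commutator_eq ▸ one_mem _
  · have hsq : ⁅g, h⁆ = (h ^ 2)⁻¹ := by
      rw [commutatorElement_def, hinv.eq, mul_inv_cancel_right, sq, mul_inv_rev]
    exact hsq ▸ inv_mem (mem_zpowers _)

end CentralizesOrInverts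

lemma semiconjBy_inv_of_sq_eq_one {g h : G} (hg : g ^ 2 = 1) (hgh : (g * h) ^ 2 = 1) :
    SemiconjBy g h h⁻¹ :=
  calc
    g * h = (g * h)⁻¹ := eq_inv_of_mul_eq_one_left (sq (g * h) ▸ hgh)
    _ = h⁻¹ * g⁻¹ := mul_inv_rev g h
    _ = h⁻¹ * g := by rw [inv_eq_of_mul_eq_one_left ((sq g).symm.trans hg)]

lemma normal_zpowers_of_closure_eq_top {S : Set G} (hS : closure S = ⊤) {h : G}
    (H : ∀ g ∈ S, CentralizesOrInverts g h) : (zpowers h).Normal := by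
  rw [← normalizer_eq_top_iff, ← top_le_iff, ← hS, closure_le]
  exact fun g hg ↦ (H g hg).mem_normalizer_zpowers

lemma normal_closure_of_forall_normal_zpowers {T : Set G} (hT : ∀ t ∈ T, (zpowers t).Normal) :
    (closure T).Normal := by
  rw [← normalizer_eq_top_iff, ← top_le_iff, le_normalizer_closure_iff]
  intro g _ t ht
  have hle : zpowers t ≤ closure T := zpowers_le.mpr (mem_closure_of_mem ht)
  exact hle ((hT t ht).conj_mem t (mem_zpowers t) g)

lemma commutator_le_of_closure_eq_top {S : Set G} (hS : closure S = ⊤) {N : Subgroup G} [N.Normal]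
    (hN : ∀ g ∈ S, ∀ h ∈ S, ⁅g, h⁆ ∈ N) : commutator G ≤ N := by
  have hgen : closure (QuotientGroup.mk' N '' S) = ⊤ := by
    rw [← MonoidHom.map_closure, hS, map_top_of_surjective _ (QuotientGroup.mk'_surjective N)]
  rw [← Normal.quotient_commutative_iff_commutator_le, ← commutator_eq_bot_iff, commutator_def,
    ← hgen, commutator_self_eq_bot_iff]
  refine isMulCommutative_closure ?_
  rintro _ ⟨g, hg, rfl⟩ _ ⟨h, hh, rfl⟩
  rw [← commutatorElement_eq_one_iff_mul_comm, ← map_commutatorElement, QuotientGroup.mk'_apply,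
    QuotientGroup.eq_one_iff]
  exact hN g hg h hh

/-- The subgroup generated by the squares of the generators is abelian, it is normal because every
generator normalizes each cyclic group `zpowers (h ^ 2)`, and it contains the commutators of
the generators. -/
theorem isMulCommutative_commutator_of_centralizesOrInverts {S : Set G} (hS : closure S = ⊤)
    (H : ∀ g ∈ S, ∀ h ∈ S, CentralizesOrInverts g h ∨ CentralizesOrInverts h g) :
    IsMulCommutative (commutator G) := by
  set N : Subgroup G := closure ((· ^ 2) '' S)
  have sq_mem : ∀ g ∈ S, zpowers (g ^ 2) ≤ N := fun g hg ↦
    zpowers_le.mpr (mem_closure_of_mem ⟨g, hg, rfl⟩)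
  have hcomm : IsMulCommutative N := by
    refine isMulCommutative_closure ?_
    rintro _ ⟨g, hg, rfl⟩ _ ⟨h, hh, rfl⟩
    rcases H g hg h hh with hgh | hhg
    · exact hgh.commute_sq.pow_right 2
    · exact (hhg.commute_sq.pow_right 2).symm
  have hnormal : N.Normal := by
    refine normal_closure_of_forall_normal_zpowers ?_
    rintro _ ⟨h, hh, rfl⟩
    refine normal_zpowers_of_closure_eq_top hS fun g hg ↦ ?_
    exact (H g hg h hh).elim (·.pow_right 2) fun hhg ↦ .inl hhg.commute_sq.symm
  have hle : commutator G ≤ N := by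
    refine commutator_le_of_closure_eq_top hS fun g hg h hh ↦ ?_
    rcases H g hg h hh with hgh | hhg
    · exact sq_mem h hh hgh.commutatorElement_mem_zpowers_sq
    · rw [← commutatorElement_inv]
      exact inv_mem (sq_mem g hg hhg.commutatorElement_mem_zpowers_sq)
  exact .of_setLike_mul_comm fun _ hx _ hy ↦ setLike_mul_comm (hle hx) (hle hy)

lemma isSolvable_of_isMulCommutative_commutator [IsMulCommutative (commutator G)] :
    Group.IsSolvable G :=
  ⟨2, commutator_self_eq_bot_iff.mpr ‹_›⟩

end Group

namespace gbmRels

open PresentedGroup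

variable {k l : ℕ} {a : Fin k → Fin k → ZMod 2} {p q : Fin k}

local notation "α" => PresentedGroup.of (rels := gbmRels k l a)

lemma of_sq (hp : (p : ℕ) < l) : (α p) ^ 2 = 1 :=
  one_of_mem (.inl ⟨p, hp, rfl⟩)

lemma semiconjBy_of_lt_of_lt (hpq : p < q) (hq : (q : ℕ) < l) : SemiconjBy (α p) (α q) (α q)⁻¹ :=
  semiconjBy_inv_of_sq_eq_one (of_sq (Nat.lt_trans hpq hq))
    (one_of_mem (.inr (.inl ⟨p, q, hpq, hq, rfl⟩)))

lemma centralizesOrInverts_of_le (hpq : p < q) (hp : l ≤ (p : ℕ)) :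
    CentralizesOrInverts (α p) (α q) := by
  have hrel := one_of_mem (rels := gbmRels k l a) (.inr (.inr (.inl ⟨p, q, hpq, hp, rfl⟩)))
  split_ifs at hrel
  · exact .inl (commutatorElement_eq_one_iff_commute.mp hrel)
  · have hinv : SemiconjBy (α p) (α q)⁻¹ (α q) := mul_inv_eq_iff_eq_mul.mp (mul_inv_eq_one.mp hrel)
    exact .inr (by simpa only [inv_inv] using hinv.inv_right)

lemma centralizesOrInverts_of_lt_of_le (hpq : p < q) (hp : (p : ℕ) < l) (hq : l ≤ (q : ℕ)) :
    CentralizesOrInverts (α p) (α q) := by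
  have hrel := one_of_mem (rels := gbmRels k l a) (.inr (.inr (.inr ⟨p, q, hpq, hp, hq, rfl⟩)))
  split_ifs at hrel
  · have hfix : α p * α q * α p = α q := mul_inv_eq_one.mp hrel
    have hself : (α p)⁻¹ = α p := inv_eq_of_mul_eq_one_left (sq (α p) ▸ of_sq hp)
    exact .inl (mul_inv_eq_iff_eq_mul.mp (hself.symm ▸ hfix))
  · exact .inr (semiconjBy_inv_of_sq_eq_one (of_sq hp) hrel)

lemma centralizesOrInverts_of_lt (hpq : p < q) : CentralizesOrInverts (α p) (α q) := by
  rcases le_or_gt l p with hp | hp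
  · exact centralizesOrInverts_of_le hpq hp
  rcases le_or_gt l q with hq | hq
  · exact centralizesOrInverts_of_lt_of_le hpq hp hq
  · exact .inr (semiconjBy_of_lt_of_lt hpq hq)

end gbmRels

/-- The commutator subgroup `[Γ, Γ]` is abelian; in particular `Γ` is solvable. -/
theorem stmt_7 (k l : ℕ) (hk : 1 ≤ k) (hl : l ≤ k) (a : Fin k → Fin k → ZMod 2) :
    (∀ x ∈ commutator (PresentedGroup (gbmRels k l a)),
      ∀ y ∈ commutator (PresentedGroup (gbmRels k l a)), x * y = y * x) ∧
    IsSolvable (PresentedGroup (gbmRels k l a)) := by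
  have hcomm : IsMulCommutative (commutator (PresentedGroup (gbmRels k l a))) := by
    refine isMulCommutative_commutator_of_centralizesOrInverts
      (PresentedGroup.closure_range_of _) ?_
    rintro _ ⟨p, rfl⟩ _ ⟨q, rfl⟩
    rcases lt_trichotomy p q with hpq | rfl | hqp
    · exact .inl (gbmRels.centralizesOrInverts_of_lt hpq)
    · exact .inl (.refl _)
    · exact .inr (gbmRels.centralizesOrInverts_of_lt hqp)
  exact ⟨fun _ hx _ hy ↦ setLike_mul_comm hx hy, isSolvable_of_isMulCommutative_commutator⟩
end

section
/- Let r be the number of indices q with l < q ≤ k for which there exists some p < q with a_{p,1}^q = 1. Then the abelianization Γ/[Γ, Γ] is isomorphic to ℤ^{k − l − r} × (ℤ/2ℤ)^{l + r}. -/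
/-!
In a commutative group the relators say only that certain generators square to `1`: the commutators
become trivial, `α_p α_q⁻¹ α_p⁻¹ α_q⁻¹` becomes `α_q⁻²`, and for `p ≤ l`, where `α_p²` is itself
a relator, `α_p α_q α_p α_q⁻¹` becomes `α_p²` and `(α_p α_q)²` becomes `α_p² α_q²`.
The generators concerned are those with `q ≤ l` and those with `a_{p,1}^q = 1` for some `p < q`.
Hence `Γ/[Γ, Γ]` has the universal property of a product of `l + r` copies of `ℤ/2ℤ` and
`k - l - r` copies of `ℤ`.
-/

section PiZMod

variable {ι : Type*} [DecidableEq ι] {A : Type*} [AddCommGroup A] {n : ι → ℕ}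

/-- The homomorphism out of `∏ i, ℤ/n i` sending the `i`-th standard generator to `x i`, for
elements `x i` killed by `n i`; it is the analogue of `ZMod.lift` for products. As `ZMod 0 = ℤ`,
infinite cyclic factors are included. -/
def piZModLift [Fintype ι] (x : ι → A) (hx : ∀ i, n i • x i = 0) : (∀ i, ZMod (n i)) →+ A :=
  AddMonoidHom.noncommPiCoprod
    (fun i ↦ ZMod.lift (n i) ⟨zmultiplesHom A (x i), by simpa using hx i⟩)
    fun _ _ _ _ _ ↦ AddCommute.all _ _

@[simp]
theorem piZModLift_single_one [Fintype ι] (x : ι → A) (hx : ∀ i, n i • x i = 0) (i : ι) :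
    piZModLift x hx (Pi.single i 1) = x i := by
  refine (AddMonoidHom.noncommPiCoprod_single _ i 1).trans ?_
  rw [← Int.cast_one, ZMod.lift_coe, zmultiplesHom_apply, one_zsmul]

theorem piZMod_addMonoidHom_ext [Finite ι] {f g : (∀ i, ZMod (n i)) →+ A}
    (h : ∀ i, f (Pi.single i 1) = g (Pi.single i 1)) : f = g := by
  refine AddMonoidHom.functions_ext _ _ _ fun i z ↦ ?_
  obtain ⟨m, rfl⟩ := ZMod.intCast_surjective z
  rw [← zsmul_one, Pi.single_smul, map_zsmul, map_zsmul, h]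

end PiZMod

/-- The isomorphism separating the two kinds of factors of a product of cyclic groups `ℤ/m` and
`ℤ/n`, given the number of factors of each kind. -/
noncomputable def piZModIteEquiv {ι : Type*} [Fintype ι] (T : ι → Prop) [DecidablePred T]
    (m n : ℕ) {s t : ℕ} (hs : Fintype.card {i // T i} = s) (ht : Fintype.card {i // ¬T i} = t) :
    (∀ i, ZMod (if T i then m else n)) ≃+ (Fin s → ZMod m) × (Fin t → ZMod n) :=
  (RingEquiv.piEquivPiSubtypeProd T _).toAddEquiv.trans <| AddEquiv.prodCongr
    ((AddEquiv.piCongrRight fun i ↦ (ZMod.ringEquivCongr (if_pos i.2)).toAddEquiv).trans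
      (AddEquiv.arrowCongr (Fintype.equivFinOfCardEq hs) (AddEquiv.refl _)))
    ((AddEquiv.piCongrRight fun i ↦ (ZMod.ringEquivCongr (if_neg i.2)).toAddEquiv).trans
      (AddEquiv.arrowCongr (Fintype.equivFinOfCardEq ht) (AddEquiv.refl _)))

theorem lift_abelianization_of_eq_one {ι : Type*} {rels : Set (FreeGroup ι)} {r : FreeGroup ι}
    (hr : r ∈ rels) :
    FreeGroup.lift (fun i ↦ Abelianization.of (PresentedGroup.of (rels := rels) i)) r = 1 := by
  have lift_eq : FreeGroup.lift (fun i ↦ Abelianization.of (PresentedGroup.of (rels := rels) i)) =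
      Abelianization.of.comp (PresentedGroup.mk rels) :=
    FreeGroup.ext_hom _ _ fun _ ↦ FreeGroup.lift_apply_of
  rw [lift_eq, MonoidHom.comp_apply, PresentedGroup.one_of_mem hr, map_one]

universe u in
/-- The abelianization of a finitely generated presented group whose relators impose on commutative
groups exactly the conditions `x i ^ n i = 1`. An index with `n i = 0` contributes a factor
`ZMod 0 = ℤ`. -/
def abelianizationEquivPiZMod {ι : Type u} [Fintype ι] [DecidableEq ι]
    {rels : Set (FreeGroup ι)} (n : ι → ℕ)
    (h : ∀ {G : Type u} [CommGroup G] (x : ι → G),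
      (∀ r ∈ rels, FreeGroup.lift x r = 1) ↔ ∀ i, x i ^ n i = 1) :
    Abelianization (PresentedGroup rels) ≃* Multiplicative (∀ i, ZMod (n i)) :=
  have single_pow (i : ι) :
      Multiplicative.ofAdd (Pi.single i 1 : ∀ i, ZMod (n i)) ^ n i = 1 := by
    rw [← ofAdd_nsmul, ← Pi.single_smul, nsmul_one, ZMod.natCast_self, Pi.single_zero, ofAdd_zero]
  have nsmul_of (i : ι) :
      n i • Additive.ofMul (Abelianization.of (PresentedGroup.of (rels := rels) i)) = 0 := by
    rw [← ofMul_pow, (h _).1 (fun _ ↦ lift_abelianization_of_eq_one) i, ofMul_one]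
  MonoidHom.toMulEquiv
    (Abelianization.lift (PresentedGroup.toGroup ((h _).2 single_pow)))
    (AddMonoidHom.toMultiplicativeLeft (piZModLift _ nsmul_of))
    (by ext i; simp)
    (AddMonoidHom.toMultiplicative.symm.injective <| piZMod_addMonoidHom_ext fun i ↦ by simp)

section GBM

variable {k l : ℕ} {a : Fin k → Fin k → ZMod 2}

/-- The indices `q` whose generator `α_q` has order two in the abelianization of `Γ`; there are
`l + r` of them, since the number `r` counts only those with `l ≤ q`. -/
def IsTorsionIndex (l : ℕ) (a : Fin k → Fin k → ZMod 2) (q : Fin k) : Prop :=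
  (q : ℕ) < l ∨ ∃ p < q, a p q = 1

theorem sq_eq_one_of_lift_gbmRels_eq_one {G : Type*} [CommGroup G] {x : Fin k → G}
    (hx : ∀ r ∈ gbmRels k l a, FreeGroup.lift x r = 1) {q : Fin k} (hq : IsTorsionIndex l a q) :
    x q ^ 2 = 1 := by
  have sq_of_lt {p : Fin k} (hp : (p : ℕ) < l) : x p ^ 2 = 1 := by
    simpa using hx _ (.inl ⟨p, hp, rfl⟩)
  rcases lt_or_ge (q : ℕ) l with hql | hlq
  · exact sq_of_lt hql
  obtain ⟨p, hpq, hpq_one⟩ := hq.resolve_left hlq.not_gt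
  have hpq_ne : a p q ≠ 0 := by simp [hpq_one]
  rcases lt_or_ge (p : ℕ) l with hpl | hlp
  · have h := hx _ (.inr (.inr (.inr ⟨p, q, hpq, hpl, hlq, rfl⟩)))
    simpa [hpq_ne, mul_pow, sq_of_lt hpl] using h
  · have h := hx _ (.inr (.inr (.inl ⟨p, q, hpq, hlp, rfl⟩)))
    simpa [hpq_ne, ← sq] using h

theorem lift_gbmRels_eq_one_of_sq_eq_one {G : Type*} [CommGroup G] {x : Fin k → G}
    (hx : ∀ q, IsTorsionIndex l a q → x q ^ 2 = 1) {r : FreeGroup (Fin k)}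
    (hr : r ∈ gbmRels k l a) : FreeGroup.lift x r = 1 := by
  have sq_of_lt {p : Fin k} (hp : (p : ℕ) < l) : x p ^ 2 = 1 := hx p (.inl hp)
  have sq_of_ne {p q : Fin k} (hpq : p < q) (h : a p q ≠ 0) : x q ^ 2 = 1 :=
    hx q (.inr ⟨p, hpq, Fin.eq_one_of_ne_zero _ h⟩)
  obtain ⟨p, hp, rfl⟩ | ⟨p, q, hpq, hq, rfl⟩ | ⟨p, q, hpq, -, rfl⟩ | ⟨p, q, hpq, hp, -, rfl⟩ := hr
  · simpa using sq_of_lt hp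
  · simp [mul_pow, sq_of_lt hq, sq_of_lt (lt_trans hpq hq)]
  · split_ifs with h
    · simp
    · simp [← sq, sq_of_ne hpq h]
  · split_ifs with h
    · simp [mul_right_comm (x p), ← sq, sq_of_lt hp]
    · simp [mul_pow, sq_of_lt hp, sq_of_ne hpq h]

theorem forall_lift_gbmRels_eq_one_iff {G : Type*} [CommGroup G] (x : Fin k → G) :
    (∀ r ∈ gbmRels k l a, FreeGroup.lift x r = 1) ↔ ∀ q, IsTorsionIndex l a q → x q ^ 2 = 1 :=
  ⟨fun hx _ ↦ sq_eq_one_of_lift_gbmRels_eq_one hx, fun hx _ ↦ lift_gbmRels_eq_one_of_sq_eq_one hx⟩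

theorem card_isTorsionIndex [DecidablePred (IsTorsionIndex l a)] (hl : l ≤ k) :
    Fintype.card {q // IsTorsionIndex l a q} =
      l + (Finset.univ.filter fun q : Fin k ↦ l ≤ (q : ℕ) ∧ ∃ p < q, a p q = 1).card := by
  have card_lt : (Finset.univ.filter fun q : Fin k ↦ (q : ℕ) < l).card = l := by
    rw [Fin.card_filter_val_lt, min_eq_right hl]
  rw [Fintype.card_subtype]
  nth_rw 2 [← card_lt]
  rw [← Finset.card_union_of_disjoint, ← Finset.filter_or]
  · congr! 2 with q
    grind [IsTorsionIndex]
  · grind [Finset.disjoint_left]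

end GBM

/-- Let `r` be the number of indices `q` with `l < q ≤ k` such that there exists
`p < q` with `a_{p,1}^q = 1`.  Then the abelianization of `Γ` is isomorphic to
`ℤ^{k−l−r} × (ℤ/2ℤ)^{l+r}`. -/
theorem stmt_8 (k l : ℕ) (hk : 1 ≤ k) (hl : l ≤ k) (a : Fin k → Fin k → ZMod 2)
    (r : ℕ)
    (hr : r = (Finset.univ.filter
      (fun q : Fin k => l ≤ (q : ℕ) ∧ ∃ p : Fin k, p < q ∧ a p q = 1)).card) :
    Nonempty (Abelianization (PresentedGroup (gbmRels k l a)) ≃*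
      Multiplicative ((Fin (k - l - r) → ℤ) × (Fin (l + r) → ZMod 2))) := by
  classical
  have card_torsion : Fintype.card {q // IsTorsionIndex l a q} = l + r := by
    rw [hr, card_isTorsionIndex hl]
  have card_free : Fintype.card {q // ¬IsTorsionIndex l a q} = k - l - r := by
    rw [Fintype.card_subtype_compl, card_torsion, Fintype.card_fin, Nat.sub_sub]
  let orders (q : Fin k) : ℕ := if IsTorsionIndex l a q then 2 else 0
  have relators_iff {G : Type} [CommGroup G] (x : Fin k → G) :
      (∀ s ∈ gbmRels k l a, FreeGroup.lift x s = 1) ↔ ∀ q, x q ^ orders q = 1 := by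
    simp only [forall_lift_gbmRels_eq_one_iff, orders, pow_ite, pow_zero, ite_eq_right_iff]
  exact ⟨(abelianizationEquivPiZMod orders relators_iff).trans
    ((piZModIteEquiv _ 2 0 card_torsion card_free).trans AddEquiv.prodComm).toMultiplicative⟩
end

section
/- Suppose A is in unipotent upper triangular form. Then the homogeneous component of degree 2 of the polynomial P equals Σ_{s=1}^{k} T'_s · x_{s,0}² + Σ_{1 ≤ r < s ≤ k} T'_{rs} · x_{r,0} x_{s,0} in 𝔽₂[x_{1,0}, …, x_{k,0}]. -/
open MvPolynomial

/-- `T'_s = Σ_{i,m} a_{s,m}^i + Σ_{i, m<m'} a_{s,m}^i a_{s,m'}^i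
  + Σ_{i<j, m_i, m_j} a_{s,m_i}^i a_{s,m_j}^j ∈ 𝔽₂`. -/
def Tp (k : ℕ) (n : Fin k → ℕ) (a : Fin k → (i : Fin k) → Fin (n i) → ZMod 2)
    (s : Fin k) : ZMod 2 :=
  (∑ i : Fin k, ∑ m : Fin (n i), a s i m)
  + (∑ i : Fin k, ∑ m : Fin (n i),
      ∑ m' ∈ Finset.univ.filter (fun m' : Fin (n i) => m < m'), a s i m * a s i m')
  + (∑ i : Fin k, ∑ j ∈ Finset.univ.filter (fun j : Fin k => i < j),
      ∑ mi : Fin (n i), ∑ mj : Fin (n j), a s i mi * a s j mj)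

/-- `T'_{rs} = 1 + Σ_{i,m} (a_{r,m}^i + a_{s,m}^i) + Σ_{i, m ≠ m'} a_{r,m}^i a_{s,m'}^i
  + Σ_{i ≠ j, m_i, m_j} a_{r,m_i}^i a_{s,m_j}^j ∈ 𝔽₂`. -/
def Tprs (k : ℕ) (n : Fin k → ℕ) (a : Fin k → (i : Fin k) → Fin (n i) → ZMod 2)
    (r s : Fin k) : ZMod 2 :=
  1 + (∑ i : Fin k, ∑ m : Fin (n i), (a r i m + a s i m))
  + (∑ i : Fin k, ∑ m : Fin (n i),
      ∑ m' ∈ Finset.univ.filter (fun m' : Fin (n i) => m' ≠ m), a r i m * a s i m')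
  + (∑ i : Fin k, ∑ j ∈ Finset.univ.filter (fun j : Fin k => j ≠ i),
      ∑ mi : Fin (n i), ∑ mj : Fin (n j), a r i mi * a s j mj)

/-- `T_s = Σ_{i, m<m'} a_{s,m}^i a_{s,m'}^i + Σ_{i<j, m_i, m_j} a_{s,m_i}^i a_{s,m_j}^j ∈ 𝔽₂`. -/
def Tq (k : ℕ) (n : Fin k → ℕ) (a : Fin k → (i : Fin k) → Fin (n i) → ZMod 2)
    (s : Fin k) : ZMod 2 :=
  (∑ i : Fin k, ∑ m : Fin (n i),
      ∑ m' ∈ Finset.univ.filter (fun m' : Fin (n i) => m < m'), a s i m * a s i m')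
  + (∑ i : Fin k, ∑ j ∈ Finset.univ.filter (fun j : Fin k => i < j),
      ∑ mi : Fin (n i), ∑ mj : Fin (n j), a s i mi * a s j mj)

/-- `T_{rs} = Σ_{i,m} a_{r,m}^i a_{s,m}^i ∈ 𝔽₂`. -/
def Trs (k : ℕ) (n : Fin k → ℕ) (a : Fin k → (i : Fin k) → Fin (n i) → ZMod 2)
    (r s : Fin k) : ZMod 2 :=
  ∑ i : Fin k, ∑ m : Fin (n i), a r i m * a s i m

/-!
The degree-two component of a product of polynomials with constant term `1` is the sum of their
degree-two components plus the sum of the products of their linear components over all pairs of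
factors. So the quadratic part of `P` is a sum of products of two linear forms, i.e. the quadratic
form of an explicit matrix `c`; its coefficient at `x_s²` is `c s s` and its coefficient at
`x_r x_s` is `c r s + c s r`, where adding the transpose turns sums over pairs `i < j` into sums
over pairs `i ≠ j`.
-/

theorem sum_sum_lt_add_swap {ι M : Type*} [Fintype ι] [LinearOrder ι] [AddCommMonoid M]
    (f : ι → ι → M) :
    ∑ i, ∑ j with i < j, (f i j + f j i) = ∑ i, ∑ j with j ≠ i, f i j := by
  have sum_swap : ∑ i, ∑ j, (if i < j then f j i else 0) = ∑ i, ∑ j, if j < i then f i j else 0 :=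
    Finset.sum_comm
  simp only [Finset.sum_add_distrib, Finset.sum_filter, sum_swap]
  simp only [← Finset.sum_add_distrib]
  refine Finset.sum_congr rfl fun i _ => Finset.sum_congr rfl fun j _ => ?_
  rcases lt_trichotomy i j with h | rfl | h
  · simp [h, h.not_gt, h.ne']
  · simp
  · simp [h, h.not_gt, h.ne]

theorem sum_sum_eq_sum_diag_add_sum_lt {ι M : Type*} [Fintype ι] [LinearOrder ι]
    [AddCommMonoid M] (f : ι → ι → M) :
    ∑ i, ∑ j, f i j = ∑ i, f i i + ∑ i, ∑ j with i < j, (f i j + f j i) := by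
  rw [sum_sum_lt_add_swap, ← Finset.sum_add_distrib]
  refine Finset.sum_congr rfl fun i _ => ?_
  rw [Finset.filter_ne', Finset.add_sum_erase _ _ (Finset.mem_univ i)]

section HomogeneousComponent

variable {σ ι R : Type*} [CommSemiring R]

theorem homogeneousComponent_mul (p q : MvPolynomial σ R) (n : ℕ) :
    homogeneousComponent n (p * q) = ∑ ij ∈ Finset.HasAntidiagonal.antidiagonal n,
      homogeneousComponent ij.1 p * homogeneousComponent ij.2 q := by
  let := gradedAlgebra (σ := σ) (R := R)
  have coe_decompose (p : MvPolynomial σ R) (i : ℕ) :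
      (DirectSum.decompose (homogeneousSubmodule σ R) p i : MvPolynomial σ R) =
        homogeneousComponent i p := decomposition.decompose'_apply p i
  simp only [← coe_decompose, DirectSum.decompose_mul,
    DirectSum.coe_mul_apply_eq_sum_antidiagonal]

theorem homogeneousComponent_one_mul {p q : MvPolynomial σ R}
    (hp : homogeneousComponent 0 p = 1) (hq : homogeneousComponent 0 q = 1) :
    homogeneousComponent 1 (p * q) = homogeneousComponent 1 p + homogeneousComponent 1 q := by
  simp only [homogeneousComponent_mul, Finset.Nat.sum_antidiagonal_eq_sum_range_succ_mk,
    Finset.sum_range_succ, Finset.sum_range_zero, Nat.sub_zero, Nat.sub_self, hp, hq]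
  ring

theorem homogeneousComponent_two_mul {p q : MvPolynomial σ R}
    (hp : homogeneousComponent 0 p = 1) (hq : homogeneousComponent 0 q = 1) :
    homogeneousComponent 2 (p * q) = homogeneousComponent 2 p + homogeneousComponent 2 q
      + homogeneousComponent 1 p * homogeneousComponent 1 q := by
  simp only [homogeneousComponent_mul, Finset.Nat.sum_antidiagonal_eq_sum_range_succ_mk,
    Finset.sum_range_succ, Finset.sum_range_zero, Nat.sub_zero, Nat.sub_self,
    Nat.add_one_sub_one, hp, hq]
  ring

theorem homogeneousComponent_zero_prod_eq_one {s : Finset ι} {p : ι → MvPolynomial σ R}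
    (hp : ∀ i ∈ s, homogeneousComponent 0 (p i) = 1) :
    homogeneousComponent 0 (∏ i ∈ s, p i) = 1 := by
  simp only [homogeneousComponent_zero, ← constantCoeff_eq, map_prod] at hp ⊢
  exact Finset.prod_eq_one hp

theorem homogeneousComponent_one_prod {s : Finset ι} {p : ι → MvPolynomial σ R}
    (hp : ∀ i ∈ s, homogeneousComponent 0 (p i) = 1) :
    homogeneousComponent 1 (∏ i ∈ s, p i) = ∑ i ∈ s, homogeneousComponent 1 (p i) := by
  classical
  induction s using Finset.induction_on with
  | empty => simp [homogeneousComponent_of_mem (isHomogeneous_one σ R)]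
  | insert b s hb ih =>
    rw [Finset.forall_mem_insert] at hp
    rw [Finset.prod_insert hb, Finset.sum_insert hb, homogeneousComponent_one_mul hp.1
      (homogeneousComponent_zero_prod_eq_one hp.2), ih hp.2]

theorem homogeneousComponent_two_prod [LinearOrder ι] {s : Finset ι}
    {p : ι → MvPolynomial σ R} (hp : ∀ i ∈ s, homogeneousComponent 0 (p i) = 1) :
    homogeneousComponent 2 (∏ i ∈ s, p i) = ∑ i ∈ s, homogeneousComponent 2 (p i)
      + ∑ i ∈ s, ∑ j ∈ s with i < j,
          homogeneousComponent 1 (p i) * homogeneousComponent 1 (p j) := by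
  induction s using Finset.induction_on_min with
  | empty => simp [homogeneousComponent_of_mem (isHomogeneous_one σ R)]
  | insert b s hb ih =>
    have hbs : b ∉ s := fun h => lt_irrefl _ (hb b h)
    have filter_b : {j ∈ insert b s | b < j} = s := by
      rw [Finset.filter_insert, if_neg (lt_irrefl b), Finset.filter_true_of_mem hb]
    have sum_s : ∑ i ∈ s, ∑ j ∈ insert b s with i < j,
          homogeneousComponent 1 (p i) * homogeneousComponent 1 (p j) =
        ∑ i ∈ s, ∑ j ∈ s with i < j,
          homogeneousComponent 1 (p i) * homogeneousComponent 1 (p j) :=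
      Finset.sum_congr rfl fun i hi => by rw [Finset.filter_insert, if_neg (hb i hi).not_gt]
    rw [Finset.forall_mem_insert] at hp
    rw [Finset.prod_insert hbs, homogeneousComponent_two_mul hp.1
        (homogeneousComponent_zero_prod_eq_one hp.2), ih hp.2, homogeneousComponent_one_prod hp.2,
      Finset.sum_insert hbs, Finset.sum_insert hbs, filter_b, sum_s, Finset.mul_sum]
    ring

theorem homogeneousComponent_one_add {l : MvPolynomial σ R} (hl : l.IsHomogeneous 1) (n : ℕ) :
    homogeneousComponent n (1 + l) = (if n = 0 then 1 else 0) + if n = 1 then l else 0 := by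
  rw [map_add, homogeneousComponent_of_mem (isHomogeneous_one σ R),
    homogeneousComponent_of_mem hl]

theorem homogeneousComponent_zero_prod_one_add {s : Finset ι} {l : ι → MvPolynomial σ R}
    (hl : ∀ i ∈ s, (l i).IsHomogeneous 1) :
    homogeneousComponent 0 (∏ i ∈ s, (1 + l i)) = 1 :=
  homogeneousComponent_zero_prod_eq_one fun i hi => by simp [homogeneousComponent_one_add (hl i hi)]

theorem homogeneousComponent_one_prod_one_add {s : Finset ι} {l : ι → MvPolynomial σ R}
    (hl : ∀ i ∈ s, (l i).IsHomogeneous 1) :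
    homogeneousComponent 1 (∏ i ∈ s, (1 + l i)) = ∑ i ∈ s, l i := by
  rw [homogeneousComponent_one_prod fun i hi => by simp [homogeneousComponent_one_add (hl i hi)]]
  exact Finset.sum_congr rfl fun i hi => by simp [homogeneousComponent_one_add (hl i hi)]

theorem homogeneousComponent_two_prod_one_add [LinearOrder ι] {s : Finset ι}
    {l : ι → MvPolynomial σ R} (hl : ∀ i ∈ s, (l i).IsHomogeneous 1) :
    homogeneousComponent 2 (∏ i ∈ s, (1 + l i)) = ∑ i ∈ s, ∑ j ∈ s with i < j, l i * l j := by
  have component_one : ∀ i ∈ s, homogeneousComponent 1 (1 + l i) = l i := fun i hi => by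
    simp [homogeneousComponent_one_add (hl i hi)]
  have component_two : ∀ i ∈ s, homogeneousComponent 2 (1 + l i) = 0 := fun i hi => by
    simp [homogeneousComponent_one_add (hl i hi)]
  rw [homogeneousComponent_two_prod fun i hi => by simp [homogeneousComponent_one_add (hl i hi)],
    Finset.sum_eq_zero component_two, zero_add]
  refine Finset.sum_congr rfl fun i hi => Finset.sum_congr rfl fun j hj => ?_
  rw [component_one i hi, component_one j (Finset.mem_of_mem_filter j hj)]

end HomogeneousComponent

section PairSum

variable {ι : Type*} [Fintype ι] [LinearOrder ι] {κ : ι → Type*} [∀ i, Fintype (κ i)]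
  [∀ i, LinearOrder (κ i)] {σ R : Type*} [CommSemiring R]

/-- The sum of the products `u p * v q` over the pairs of positions `p < q`, where the positions
`(i, m)` are ordered lexicographically; pairs within a block and pairs across two blocks are
summed separately, as in `T'_s`. -/
def ltPairSum (u v : (i : ι) → κ i → R) : R :=
  (∑ i, ∑ m, ∑ m' with m < m', u i m * v i m')
    + ∑ i, ∑ j with i < j, ∑ m, ∑ m', u i m * v j m'

/-- The sum of the products `u p * v q` over the pairs of distinct positions `p` and `q`, each of
the form `(i, m)`; pairs within a block and pairs across two blocks are summed separately, as in
`T'_{rs}`. -/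
def nePairSum (u v : (i : ι) → κ i → R) : R :=
  (∑ i, ∑ m, ∑ m' with m' ≠ m, u i m * v i m')
    + ∑ i, ∑ j with j ≠ i, ∑ m, ∑ m', u i m * v j m'

theorem ltPairSum_add_swap (u v : (i : ι) → κ i → R) :
    ltPairSum u v + ltPairSum v u = nePairSum u v := by
  have within_blocks (i : ι) : ∑ m, ∑ m' with m' ≠ m, u i m * v i m' =
      ∑ m, ∑ m' with m < m', u i m * v i m' + ∑ m, ∑ m' with m < m', v i m * u i m' := by
    simp only [← sum_sum_lt_add_swap, Finset.sum_add_distrib, mul_comm (v i _)]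
  have across_blocks : ∑ i, ∑ j with j ≠ i, ∑ m, ∑ m', u i m * v j m' =
      ∑ i, ∑ j with i < j, ∑ m, ∑ m', u i m * v j m'
        + ∑ i, ∑ j with i < j, ∑ m, ∑ m', v i m * u j m' := by
    simp only [← sum_sum_lt_add_swap, Finset.sum_add_distrib, ← Finset.sum_mul_sum,
      mul_comm (∑ m, v _ m)]
  simp only [ltPairSum, nePairSum, within_blocks, across_blocks, Finset.sum_add_distrib]
  exact add_add_add_comm _ _ _ _

theorem homogeneousComponent_two_prod_prod_one_add {l : (i : ι) → κ i → MvPolynomial σ R}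
    (hl : ∀ i m, (l i m).IsHomogeneous 1) :
    homogeneousComponent 2 (∏ i, ∏ m, (1 + l i m)) = ltPairSum l l := by
  rw [homogeneousComponent_two_prod fun i _ =>
    homogeneousComponent_zero_prod_one_add fun m _ => hl i m]
  simp only [homogeneousComponent_one_prod_one_add fun m _ => hl _ m,
    homogeneousComponent_two_prod_one_add fun m _ => hl _ m, ltPairSum, Finset.sum_mul_sum]

end PairSum

section Forms

variable {σ R : Type*} [Fintype σ] [CommSemiring R]

/-- The linear form with coefficients `u`, bundled as a linear map in `u`. -/
noncomputable def linForm : (σ → R) →ₗ[R] MvPolynomial σ R where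
  toFun u := ∑ r, C (u r) * X r
  map_add' u v := by simp [add_mul, Finset.sum_add_distrib]
  map_smul' c u := by simp [Finset.mul_sum, mul_assoc, smul_eq_C_mul]

/-- The quadratic form of a (not necessarily symmetric) matrix `c`, bundled as a linear map
in `c`. -/
noncomputable def quadForm : (σ → σ → R) →ₗ[R] MvPolynomial σ R where
  toFun c := ∑ r, ∑ s, C (c r s) * (X r * X s)
  map_add' c d := by simp [add_mul, Finset.sum_add_distrib]
  map_smul' a c := by simp [Finset.mul_sum, mul_assoc, smul_eq_C_mul]

theorem linForm_apply (u : σ → R) : linForm u = ∑ r, C (u r) * X r := rfl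

theorem quadForm_apply (c : σ → σ → R) : quadForm c = ∑ r, ∑ s, C (c r s) * (X r * X s) := rfl

theorem isHomogeneous_linForm (u : σ → R) : (linForm u).IsHomogeneous 1 :=
  .sum _ _ _ fun r _ => isHomogeneous_C_mul_X (u r) r

theorem linForm_mul_linForm (u v : σ → R) :
    linForm u * linForm v = quadForm fun r s => u r * v s := by
  simp only [linForm_apply, quadForm_apply, Finset.sum_mul_sum, C_mul, mul_mul_mul_comm]

theorem quadForm_eq_sum_sq_add_sum_lt [LinearOrder σ] (c : σ → σ → R) :
    quadForm c = ∑ s, C (c s s) * X s ^ 2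
      + ∑ r, ∑ s with r < s, C (c r s + c s r) * (X r * X s) := by
  rw [quadForm_apply, sum_sum_eq_sum_diag_add_sum_lt]
  simp only [sq]
  congr 1
  refine Finset.sum_congr rfl fun r _ => Finset.sum_congr rfl fun s _ => ?_
  rw [C_add]
  ring

variable {ι : Type*} [Fintype ι] [LinearOrder ι] {κ : ι → Type*} [∀ i, Fintype (κ i)]
  [∀ i, LinearOrder (κ i)]

theorem ltPairSum_linForm (a : σ → (i : ι) → κ i → R) :
    ltPairSum (fun i m => linForm fun j => a j i m) (fun i m => linForm fun j => a j i m)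
      = quadForm fun r s => ltPairSum (a r) (a s) := by
  simp only [ltPairSum, linForm_mul_linForm, ← map_sum, ← map_add]
  congr 1
  ext r s
  simp only [Pi.add_apply, Finset.sum_apply]

theorem homogeneousComponent_two_prod_one_add_X [LinearOrder σ] :
    homogeneousComponent 2 (∏ i, (1 + X i : MvPolynomial σ R))
      = quadForm fun r s => if r < s then 1 else 0 := by
  rw [homogeneousComponent_two_prod_one_add fun i _ => isHomogeneous_X R i, quadForm_apply]
  simp only [Finset.sum_filter, apply_ite C, map_one, map_zero, ite_mul, one_mul, zero_mul]

theorem homogeneousComponent_two_prod_one_add_X_mul_prod_prod [LinearOrder σ]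
    (a : σ → (i : ι) → κ i → R) :
    homogeneousComponent 2
        ((∏ i, (1 + X i : MvPolynomial σ R)) * ∏ i, ∏ m, (1 + linForm fun j => a j i m))
      = quadForm fun r s =>
          (if r < s then 1 else 0) + ltPairSum (a r) (a s) + ∑ i, ∑ m, a s i m := by
  have isHomogeneous_factor (i : ι) (m : κ i) : (linForm fun j => a j i m).IsHomogeneous 1 :=
    isHomogeneous_linForm _
  have zero_block (i : ι) := homogeneousComponent_zero_prod_one_add (s := Finset.univ)
    fun m _ => isHomogeneous_factor i m
  have component_one_X : homogeneousComponent 1 (∏ i, (1 + X i : MvPolynomial σ R))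
      = linForm fun _ => 1 := by
    simp [homogeneousComponent_one_prod_one_add fun i _ => isHomogeneous_X R i, linForm_apply]
  have component_one_blocks :
      homogeneousComponent 1 (∏ i, ∏ m, (1 + linForm fun j => a j i m))
        = linForm (∑ i, ∑ m, fun j => a j i m) := by
    simp only [homogeneousComponent_one_prod fun i _ => zero_block i, map_sum,
      homogeneousComponent_one_prod_one_add fun m _ => isHomogeneous_factor _ m]
  rw [homogeneousComponent_two_mul
      (homogeneousComponent_zero_prod_one_add fun i _ => isHomogeneous_X R i)
      (homogeneousComponent_zero_prod_eq_one fun i _ => zero_block i),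
    homogeneousComponent_two_prod_one_add_X,
    homogeneousComponent_two_prod_prod_one_add isHomogeneous_factor, ltPairSum_linForm,
    component_one_X, component_one_blocks, linForm_mul_linForm, ← map_add, ← map_add]
  congr 1
  ext r s
  simp only [Pi.add_apply, Finset.sum_apply, one_mul]

end Forms

theorem stmt_12_general {σ ι R : Type*} [Fintype σ] [LinearOrder σ] [Fintype ι] [LinearOrder ι]
    {κ : ι → Type*} [∀ i, Fintype (κ i)] [∀ i, LinearOrder (κ i)] [CommSemiring R]
    (a : σ → (i : ι) → κ i → R) :
    homogeneousComponent 2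
        ((∏ i, (1 + X i : MvPolynomial σ R)) * ∏ i, ∏ m, (1 + ∑ j, C (a j i m) * X j))
      = ∑ s, C ((∑ i, ∑ m, a s i m) + ltPairSum (a s) (a s)) * X s ^ 2
        + ∑ r, ∑ s with r < s,
            C (1 + (∑ i, ∑ m, (a r i m + a s i m)) + nePairSum (a r) (a s)) * (X r * X s) := by
  refine ((homogeneousComponent_two_prod_one_add_X_mul_prod_prod a).trans
    (quadForm_eq_sum_sq_add_sum_lt _)).trans ?_
  congr 1
  · refine Finset.sum_congr rfl fun s _ => ?_
    rw [if_neg (lt_irrefl s), zero_add, add_comm]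
  · refine Finset.sum_congr rfl fun r _ => Finset.sum_congr rfl fun s hs => ?_
    have hrs : r < s := (Finset.mem_filter.mp hs).2
    rw [if_pos hrs, if_neg hrs.not_gt, ← ltPairSum_add_swap]
    simp only [Finset.sum_add_distrib]
    congr 2
    ring

/-- If `A` is in unipotent upper triangular form, then the degree-2 homogeneous
component of `P = ∏_i (1 + x_{i,0}) · ∏_{i,m} (1 + Σ_j a_{j,m}^i x_{j,0})` equals
`Σ_s T'_s x_{s,0}² + Σ_{r<s} T'_{rs} x_{r,0} x_{s,0}` in `𝔽₂[x_{1,0}, …, x_{k,0}]`. -/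
theorem stmt_12 (k : ℕ) (hk : 1 ≤ k) (n : Fin k → ℕ) (hn : ∀ i, 1 ≤ n i)
    (a : Fin k → (i : Fin k) → Fin (n i) → ZMod 2)
    (hUT : ∀ j i : Fin k, i < j → ∀ m : Fin (n i), a j i m = 0)
    (hdiag : ∀ i : Fin k, ∀ m : Fin (n i), a i i m = 1) :
    MvPolynomial.homogeneousComponent 2
        ((∏ i : Fin k, (1 + (X i : MvPolynomial (Fin k) (ZMod 2))))
          * ∏ i : Fin k, ∏ m : Fin (n i), (1 + ∑ j : Fin k, C (a j i m) * X j))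
      = (∑ s : Fin k, C (Tp k n a s) * X s ^ 2)
        + ∑ r : Fin k, ∑ s ∈ Finset.univ.filter (fun s : Fin k => r < s),
            C (Tprs k n a r s) * (X r * X s) := by
  simpa only [Tp, Tprs, ltPairSum, nePairSum, add_assoc] using stmt_12_general a
end

section
/- Suppose A is in unipotent upper triangular form. Then for any coefficients c_1, …, c_k ∈ 𝔽₂, the linear form Σ_{j=1}^{k} c_j x_{j,0} belongs to the ideal I if and only if c_j = 0 for all j. Consequently, the element Σ_{j=1}^{k} (1 + Σ_{i=1}^{k} Σ_{m=1}^{n_i} a_{j,m}^i) · x_{j,0} belongs to I if and only if Σ_{i=1}^{k} Σ_{m=1}^{n_i} a_{j,m}^i = 1 in 𝔽₂ for every 1 ≤ j ≤ k. -/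
open MvPolynomial

/-- The ideal `I` of `R = 𝔽₂[x_{i,m} : 1 ≤ i ≤ k, 0 ≤ m ≤ n_i]` generated by the monomials
`x_{i,0} x_{i,1} ⋯ x_{i,n_i}` for each `i`, together with the linear forms
`x_{i,m} + Σ_{j=1}^{i} a_{j,m}^i x_{j,0}` for each `i` and `1 ≤ m ≤ n_i`
(within block `i` the variables `x_{i,1}, …, x_{i,n_i}` are 0-indexed by `m : Fin (n i)`,
`x_{i,m}` being the variable `X ⟨i, m.succ⟩`). -/
noncomputable def bottIdeal (k : ℕ) (n : Fin k → ℕ) (a : Fin k → (i : Fin k) → Fin (n i) → ZMod 2) :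
    Ideal (MvPolynomial (Σ i : Fin k, Fin (n i + 1)) (ZMod 2)) :=
  Ideal.span
    ({p | ∃ i : Fin k, p = ∏ m : Fin (n i + 1), X ⟨i, m⟩} ∪
     {p | ∃ i : Fin k, ∃ m : Fin (n i),
        p = X ⟨i, m.succ⟩ +
          ∑ j ∈ Finset.univ.filter (fun j : Fin k => j ≤ i), C (a j i m) * X ⟨j, 0⟩})

/-!
Sending each variable to a square-zero element of a trivial square-zero extension kills every
monomial of degree at least two, so it reads off the linear part of a polynomial. Choosing
`x_{i,0} ↦ ε e_i` makes the linear relations say where `x_{i,m}` with `m ≥ 1` has to go. As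
`n_i ≥ 1`, the monomial generators have degree at least two, so the resulting homomorphism kills
the ideal, and it sends `∑ c_j x_{j,0}` to `ε c`.
-/

section SquareZero

variable {R M σ ι : Type*} [CommSemiring R] [AddCommMonoid M] [Module R M] [Module Rᵐᵒᵖ M]
  [IsCentralScalar R M]

theorem prod_inr_eq_zero {s : Finset ι} (hs : 1 < s.card) (v : ι → M) :
    ∏ i ∈ s, (TrivSqZeroExt.inr (v i) : TrivSqZeroExt R M) = 0 := by
  classical
  obtain ⟨i, hi, j, hj, hij⟩ := Finset.one_lt_card.mp hs
  rw [← Finset.mul_prod_erase s _ hi,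
    ← Finset.mul_prod_erase (s.erase i) _ (Finset.mem_erase.mpr ⟨hij.symm, hj⟩),
    ← mul_assoc, TrivSqZeroExt.inr_mul_inr, zero_mul]

/-- Evaluation of polynomials at the square-zero elements `ε v_t` of the trivial square-zero
extension `R ⊕ ε M`. It retains exactly the constant term and the linear part, the latter
evaluated at `v`. -/
noncomputable def evalInr (v : σ → M) : MvPolynomial σ R →ₐ[R] TrivSqZeroExt R M :=
  aeval fun t => TrivSqZeroExt.inr (v t)

theorem evalInr_X (v : σ → M) (t : σ) :
    evalInr v (X t : MvPolynomial σ R) = TrivSqZeroExt.inr (v t) :=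
  aeval_X _ t

theorem evalInr_prod_X {s : Finset ι} (hs : 1 < s.card) (v : σ → M) (f : ι → σ) :
    evalInr v (∏ i ∈ s, X (f i) : MvPolynomial σ R) = 0 := by
  simp only [map_prod, evalInr_X, prod_inr_eq_zero hs]

theorem evalInr_sum_C_mul_X (s : Finset ι) (v : σ → M) (c : ι → R) (f : ι → σ) :
    evalInr v (∑ i ∈ s, C (c i) * X (f i)) = TrivSqZeroExt.inr (∑ i ∈ s, c i • v (f i)) := by
  simp only [← smul_eq_C_mul, map_sum, map_smul, evalInr_X, TrivSqZeroExt.inr_sum,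
    TrivSqZeroExt.inr_smul]

end SquareZero

section BlockIdeal

variable {R ι : Type*} [CommRing R] {n : ι → ℕ}

/-- The analogue of `bottIdeal` over a commutative ring and a finite set of blocks without an
order: the linear generators `x_{i,m} + ∑_j b_{j,m}^i x_{j,0}` involve all blocks `j`. -/
noncomputable def blockIdeal [Fintype ι] (b : ι → (i : ι) → Fin (n i) → R) :
    Ideal (MvPolynomial (Σ i : ι, Fin (n i + 1)) R) :=
  Ideal.span
    ({p | ∃ i : ι, p = ∏ m : Fin (n i + 1), X ⟨i, m⟩} ∪
     {p | ∃ i : ι, ∃ m : Fin (n i), p = X ⟨i, m.succ⟩ + ∑ j, C (b j i m) * X ⟨j, 0⟩})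

/-- The vectors `v_{i,0} = e_i` and `v_{i,m} = -∑_j b_{j,m}^i e_j` for `m ≥ 1`, the solution of
the linear relations of `blockIdeal b` in `R^ι` extending `x_{i,0} ↦ e_i`. -/
def blockVector [DecidableEq ι] (b : ι → (i : ι) → Fin (n i) → R)
    (t : Σ i : ι, Fin (n i + 1)) : ι → R :=
  Fin.cases (Pi.single t.1 1) (fun m j => -b j t.1 m) t.2

theorem blockVector_succ [DecidableEq ι] (b : ι → (i : ι) → Fin (n i) → R) (i : ι)
    (m : Fin (n i)) :
    blockVector b ⟨i, m.succ⟩ = -fun j => b j i m :=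
  rfl

variable [Fintype ι]

theorem sum_smul_blockVector_zero [DecidableEq ι] (b : ι → (i : ι) → Fin (n i) → R)
    (c : ι → R) :
    ∑ j, c j • blockVector b ⟨j, 0⟩ = c :=
  (pi_eq_sum_univ' c).symm

theorem blockIdeal_le_ker_evalInr [DecidableEq ι] (hn : ∀ i, 1 ≤ n i)
    (b : ι → (i : ι) → Fin (n i) → R) :
    blockIdeal b ≤ RingHom.ker (evalInr (R := R) (blockVector b)) := by
  rw [blockIdeal, Ideal.span_le]
  rintro p (⟨i, rfl⟩ | ⟨i, m, rfl⟩)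
  · have two_le_card : 1 < (Finset.univ : Finset (Fin (n i + 1))).card := by
      rw [Finset.card_fin]
      exact Nat.lt_succ_of_le (hn i)
    exact evalInr_prod_X two_le_card _ _
  · rw [SetLike.mem_coe, RingHom.mem_ker, map_add, evalInr_X, evalInr_sum_C_mul_X,
      blockVector_succ, sum_smul_blockVector_zero b fun j => b j i m, ← TrivSqZeroExt.inr_add,
      neg_add_cancel, TrivSqZeroExt.inr_zero]

theorem sum_C_mul_X_mem_blockIdeal_iff (hn : ∀ i, 1 ≤ n i)
    (b : ι → (i : ι) → Fin (n i) → R) (c : ι → R) :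
    ∑ j, C (c j) * X (⟨j, 0⟩ : Σ i : ι, Fin (n i + 1)) ∈ blockIdeal b ↔ c = 0 := by
  classical
  refine ⟨fun h => ?_, fun h => ?_⟩
  · have inr_eq_zero : (TrivSqZeroExt.inr c : TrivSqZeroExt R (ι → R)) = 0 := by
      simpa only [RingHom.mem_ker, evalInr_sum_C_mul_X, sum_smul_blockVector_zero] using
        blockIdeal_le_ker_evalInr hn b h
    exact TrivSqZeroExt.inr_injective inr_eq_zero
  · simp only [h, Pi.zero_apply, map_zero, zero_mul, Finset.sum_const_zero, zero_mem]

end BlockIdeal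

theorem bottIdeal_eq_blockIdeal (k : ℕ) (n : Fin k → ℕ)
    (a : Fin k → (i : Fin k) → Fin (n i) → ZMod 2) :
    bottIdeal k n a = blockIdeal fun j i m => if j ≤ i then a j i m else 0 := by
  simp only [bottIdeal, blockIdeal, Finset.sum_filter, apply_ite C, map_zero, ite_mul, zero_mul]

theorem stmt_14_general (k : ℕ) (n : Fin k → ℕ) (hn : ∀ i, 1 ≤ n i)
    (a : Fin k → (i : Fin k) → Fin (n i) → ZMod 2) :
    (∀ c : Fin k → ZMod 2,
      (∑ j : Fin k, C (c j) * X (⟨j, 0⟩ : Σ i : Fin k, Fin (n i + 1)) ∈ bottIdeal k n a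
        ↔ ∀ j : Fin k, c j = 0)) ∧
    ((∑ j : Fin k, C (1 + ∑ i : Fin k, ∑ m : Fin (n i), a j i m)
        * X (⟨j, 0⟩ : Σ i : Fin k, Fin (n i + 1)) ∈ bottIdeal k n a)
      ↔ ∀ j : Fin k, (∑ i : Fin k, ∑ m : Fin (n i), a j i m) = 1) := by
  have mem_iff (c : Fin k → ZMod 2) :
      ∑ j, C (c j) * X (⟨j, 0⟩ : Σ i : Fin k, Fin (n i + 1)) ∈ bottIdeal k n a ↔
        ∀ j, c j = 0 := by
    rw [bottIdeal_eq_blockIdeal, sum_C_mul_X_mem_blockIdeal_iff hn, funext_iff]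
    rfl
  exact ⟨mem_iff, (mem_iff _).trans <| forall_congr' fun j => CharTwo.add_eq_zero.trans eq_comm⟩

/-- Suppose `A` is in unipotent upper triangular form.  Then a linear form
`Σ_j c_j x_{j,0}` lies in `I` iff all `c_j = 0`; consequently,
`Σ_j (1 + Σ_{i,m} a_{j,m}^i) x_{j,0} ∈ I` iff `Σ_{i,m} a_{j,m}^i = 1` for every `j`. -/
theorem stmt_14 (k : ℕ) (hk : 1 ≤ k) (n : Fin k → ℕ) (hn : ∀ i, 1 ≤ n i)
    (a : Fin k → (i : Fin k) → Fin (n i) → ZMod 2)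
    (hUT : ∀ j i : Fin k, i < j → ∀ m : Fin (n i), a j i m = 0)
    (hdiag : ∀ i : Fin k, ∀ m : Fin (n i), a i i m = 1) :
    (∀ c : Fin k → ZMod 2,
      (∑ j : Fin k, C (c j) * X (⟨j, 0⟩ : Σ i : Fin k, Fin (n i + 1)) ∈ bottIdeal k n a
        ↔ ∀ j : Fin k, c j = 0)) ∧
    ((∑ j : Fin k, C (1 + ∑ i : Fin k, ∑ m : Fin (n i), a j i m)
        * X (⟨j, 0⟩ : Σ i : Fin k, Fin (n i + 1)) ∈ bottIdeal k n a)
      ↔ ∀ j : Fin k, (∑ i : Fin k, ∑ m : Fin (n i), a j i m) = 1) :=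
  stmt_14_general k n hn a
end

section
/- Suppose A is in unipotent upper triangular form, satisfies the orientability condition, and n_1, …, n_l ≥ 2 while n_{l+1} = ⋯ = n_k = 1. Then the element Σ_{s=1}^{l} (1 + T_s) · x_{s,0}² + Σ_{1 ≤ r < s ≤ l} T_{rs} · x_{r,0} x_{s,0} + Σ_{1 ≤ r < s ≤ k, s > l} (T_{rs} + a_{r,1}^s · (1 + T_s)) · x_{r,0} x_{s,0} of R belongs to the ideal I if and only if all of the following hold in 𝔽₂: T_s = 1 for all 1 ≤ s ≤ l; T_{rs} = 0 for all 1 ≤ r < s ≤ l; and T_{rs} + a_{r,1}^s · (1 + T_s) = 0 for all 1 ≤ r < s ≤ k with s > l. -/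
open MvPolynomial

/-! The linear generators of `I` eliminate the `x_{i,m}` with `m ≥ 1`.  The others become
homogeneous of degree `n_i + 1 ≥ 2`, so the quadratic part of an element of the eliminated ideal is
an `𝔽₂`-linear combination of the generators with `n_i = 1`, that is, of products `x_i (x_i + ⋯)`.
Since `x_i²` occurs in no generator but the `i`-th, a quadratic form in the ideal that has no term
`x_i²` with `n_i = 1` is zero. -/

section QuadraticPart

variable {σ R : Type*} [CommSemiring R]

lemma coeff_mul_of_isHomogeneous_right {e : ℕ} {g : MvPolynomial σ R} (hg : g.IsHomogeneous e)
    (f : MvPolynomial σ R) {d : σ →₀ ℕ} (hd : d.degree ≤ e) :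
    coeff d (f * g) = coeff 0 f * coeff d g := by
  classical
  rw [coeff_mul]
  refine Finset.sum_eq_single_of_mem (0, d) (by simp) ?_
  rintro ⟨u, v⟩ huv hne
  rw [Finset.HasAntidiagonal.mem_antidiagonal] at huv
  have hu : u ≠ 0 := by
    rintro rfl
    exact hne (by simpa using huv)
  have hu_pos : 0 < u.degree := Nat.pos_of_ne_zero (mt (Finsupp.degree_eq_zero_iff u).mp hu)
  have hdeg : u.degree + v.degree = d.degree := by rw [← huv, map_add]
  rw [hg.coeff_eq_zero (show v.degree ≠ e by omega), mul_zero]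

lemma coeff_single_two_X_mul [DecidableEq σ] (i j : σ) (p : MvPolynomial σ R) :
    coeff (Finsupp.single i 2) (X j * p) = if j = i then coeff (Finsupp.single i 1) p else 0 := by
  rw [coeff_X_mul', Finsupp.support_single _ two_ne_zero]
  by_cases hji : j = i
  · subst hji
    simp [← Finsupp.single_tsub]
  · simp [hji]

theorem isHomogeneous_two_mem_span_X_mul_iff {P : σ → MvPolynomial σ R} {e : σ → ℕ}
    (he : ∀ i, 1 ≤ e i) (hP : ∀ i, (P i).IsHomogeneous (e i))
    (hlead : ∀ i, e i = 1 → coeff (Finsupp.single i 1) (P i) ∈ nonZeroDivisors R)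
    {Q : MvPolynomial σ R} (hQ : Q.IsHomogeneous 2)
    (hsq : ∀ i, e i = 1 → coeff (Finsupp.single i 2) Q = 0) :
    Q ∈ Ideal.span (Set.range fun i => X i * P i) ↔ Q = 0 := by
  classical
  refine ⟨fun hmem => ?_, fun h => h ▸ Ideal.zero_mem _⟩
  obtain ⟨f, rfl⟩ := Finsupp.mem_ideal_span_range_iff_exists_finsupp.mp hmem
  have hgen (i : σ) : (X i * P i).IsHomogeneous (1 + e i) := (isHomogeneous_X R i).mul (hP i)
  have hcoeff {d : σ →₀ ℕ} (hd : d.degree = 2) :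
      coeff d (f.sum fun i p => p * (X i * P i)) =
        ∑ i ∈ f.support, coeff 0 (f i) * coeff d (X i * P i) := by
    rw [Finsupp.sum, coeff_sum]
    refine Finset.sum_congr rfl fun i _ => coeff_mul_of_isHomogeneous_right (hgen i) _ ?_
    have := he i
    omega
  have hconst (i : σ) (hi : e i = 1) : coeff 0 (f i) = 0 := by
    have h := hsq i hi
    simp only [hcoeff (Finsupp.degree_single i 2), coeff_single_two_X_mul, mul_ite, mul_zero,
      Finset.sum_ite_eq', Finsupp.mem_support_iff] at h
    by_cases hfi : f i = 0
    · rw [hfi, coeff_zero]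
    · rwa [if_pos hfi, mul_right_mem_nonZeroDivisors_eq_zero_iff (hlead i hi)] at h
  ext d
  by_cases hd : d.degree = 2
  · rw [hcoeff hd, coeff_zero]
    refine Finset.sum_eq_zero fun i _ => ?_
    by_cases hi : e i = 1
    · rw [hconst i hi, zero_mul]
    · rw [(hgen i).coeff_eq_zero (by omega), mul_zero]
  · rw [hQ.coeff_eq_zero hd, coeff_zero]

end QuadraticPart

section UpperQuadForm

variable {σ R : Type*} [Fintype σ] [LinearOrder σ] [CommSemiring R]

/-- The quadratic form `∑_{i ≤ j} c i j x_i x_j`; only the entries of `c` on and above the diagonal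
matter. -/
noncomputable def upperQuadForm (c : σ → σ → R) : MvPolynomial σ R :=
  ∑ i, ∑ j with i ≤ j, C (c i j) * (X i * X j)

lemma isHomogeneous_upperQuadForm (c : σ → σ → R) : (upperQuadForm c).IsHomogeneous 2 :=
  .sum _ _ _ fun i _ => .sum _ _ _ fun j _ =>
    ((isHomogeneous_X R i).mul (isHomogeneous_X R j)).C_mul _

lemma coeff_upperQuadForm (c : σ → σ → R) {r s : σ} (hrs : r ≤ s) :
    coeff (Finsupp.single r 1 + Finsupp.single s 1) (upperQuadForm c) = c r s := by
  have hterm (i j : σ) (hij : i ≤ j) :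
      coeff (Finsupp.single r 1 + Finsupp.single s 1) (C (c i j) * (X i * X j)) =
        if i = r ∧ j = s then c i j else 0 := by
    have hpair : Finsupp.single i 1 + Finsupp.single j 1 =
        Finsupp.single r 1 + Finsupp.single s 1 ↔ i = r ∧ j = s := by
      rw [Finsupp.single_add_single_eq_single_add_single one_ne_zero one_ne_zero]
      grind
    rw [X, X, monomial_mul, C_mul_monomial, coeff_monomial]
    simp only [hpair, mul_one]
  simp only [upperQuadForm, coeff_sum]
  rw [Finset.sum_eq_single r, Finset.sum_eq_single s]
  · simp [hterm r s hrs]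
  · intro j hj hjs
    rw [hterm r j (Finset.mem_filter.mp hj).2, if_neg (by tauto)]
  · simp [hrs]
  · intro i _ hir
    refine Finset.sum_eq_zero fun j hj => ?_
    rw [hterm i j (Finset.mem_filter.mp hj).2, if_neg (by tauto)]
  · simp

lemma upperQuadForm_eq_zero_iff {c : σ → σ → R} :
    upperQuadForm c = 0 ↔ ∀ r s, r ≤ s → c r s = 0 := by
  constructor
  · intro h r s hrs
    rw [← coeff_upperQuadForm c hrs, h, coeff_zero]
  · intro h
    refine Finset.sum_eq_zero fun r _ => Finset.sum_eq_zero fun s hs => ?_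
    rw [h r s (Finset.mem_filter.mp hs).2, C_0, zero_mul]

lemma sum_sq_add_sum_add_sum_eq_upperQuadForm (p : σ → Prop) [DecidablePred p]
    (b : σ → R) (c d : σ → σ → R) :
    ∑ s with p s, C (b s) * X s ^ 2 + ∑ r, ∑ s with r < s ∧ p s, C (c r s) * (X r * X s) +
        ∑ r, ∑ s with r < s ∧ ¬ p s, C (d r s) * (X r * X s) =
      upperQuadForm fun r s =>
        if p s then if r = s then b s else c r s else if r = s then 0 else d r s := by
  rw [Finset.sum_filter, ← Finset.sum_add_distrib, ← Finset.sum_add_distrib, upperQuadForm]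
  refine Finset.sum_congr rfl fun r _ => ?_
  have hle : Finset.univ.filter (r ≤ ·) = insert r (Finset.univ.filter (r < ·)) := by
    ext s
    simp [le_iff_eq_or_lt, eq_comm]
  rw [hle, Finset.sum_insert (by simp), add_assoc,
    ← Finset.sum_filter_add_sum_filter_not (Finset.univ.filter (r < ·)) p,
    Finset.filter_filter, Finset.filter_filter]
  congr 1
  · by_cases hr : p r <;> simp [hr, sq]
  · congr 1 <;> refine Finset.sum_congr rfl fun s hs => ?_ <;>
      obtain ⟨hrs, hps⟩ := (Finset.mem_filter.mp hs).2 <;> simp [hps, hrs.ne]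

end UpperQuadForm

section Elimination

variable {k : ℕ} {n : Fin k → ℕ} (a : Fin k → (i : Fin k) → Fin (n i) → ZMod 2)

/-- The linear form `Σ_{j ≤ i} a_{j,m}^i x_j`, to which `x_{i,m}` is congruent modulo `I`. -/
noncomputable def bottLinearForm (i : Fin k) (m : Fin (n i)) : MvPolynomial (Fin k) (ZMod 2) :=
  ∑ j with j ≤ i, C (a j i m) * X j

/-- The elimination of the variables `x_{i,m}`, `m ≥ 1`, by means of the linear generators of `I`;
the remaining `x_{i,0}` is written `x_i`. -/
noncomputable def bottElimination :
    MvPolynomial (Σ i : Fin k, Fin (n i + 1)) (ZMod 2) →ₐ[ZMod 2] MvPolynomial (Fin k) (ZMod 2) :=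
  aeval fun v => Fin.cases (X v.1) (bottLinearForm a v.1) v.2

lemma isHomogeneous_bottLinearForm (i : Fin k) (m : Fin (n i)) :
    (bottLinearForm a i m).IsHomogeneous 1 :=
  .sum _ _ _ fun j _ => isHomogeneous_C_mul_X (a j i m) j

lemma coeff_single_bottLinearForm_self (i : Fin k) (m : Fin (n i)) :
    coeff (Finsupp.single i 1) (bottLinearForm a i m) = a i i m := by
  simp [bottLinearForm, coeff_sum, coeff_C_mul, coeff_X, Finsupp.single_left_inj]

lemma bottElimination_X_zero (i : Fin k) : bottElimination a (X ⟨i, 0⟩) = X i := by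
  simp [bottElimination]

lemma bottElimination_X_succ (i : Fin k) (m : Fin (n i)) :
    bottElimination a (X ⟨i, m.succ⟩) = bottLinearForm a i m := by
  simp [bottElimination]

lemma bottElimination_rename (p : MvPolynomial (Fin k) (ZMod 2)) :
    bottElimination a (rename (fun i => ⟨i, 0⟩) p) = p := by
  rw [bottElimination, aeval_rename]
  exact aeval_X_left_apply p

lemma bottIdeal_le_comap_bottElimination :
    bottIdeal k n a ≤
      (Ideal.span (Set.range fun i => X i * ∏ m, bottLinearForm a i m)).comap
        (bottElimination a) := by
  rw [bottIdeal, Ideal.span_le]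
  rintro _ (⟨i, rfl⟩ | ⟨i, m, rfl⟩) <;> rw [SetLike.mem_coe, Ideal.mem_comap]
  · rw [map_prod, Fin.prod_univ_succ, bottElimination_X_zero]
    simp only [bottElimination_X_succ]
    exact Ideal.subset_span ⟨i, rfl⟩
  · have hsum : bottElimination a (∑ j with j ≤ i, C (a j i m) * X ⟨j, 0⟩) =
        bottLinearForm a i m := by
      simp only [map_sum, map_mul, bottElimination_X_zero, algHom_C, algebraMap_eq, bottLinearForm]
    rw [map_add, bottElimination_X_succ, hsum, CharTwo.add_self_eq_zero]
    exact Ideal.zero_mem _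

variable {a}

theorem rename_mem_bottIdeal_iff_of_isHomogeneous_two (hn : ∀ i, 1 ≤ n i)
    (hdiag : ∀ i m, a i i m = 1) {Q : MvPolynomial (Fin k) (ZMod 2)} (hQ : Q.IsHomogeneous 2)
    (hsq : ∀ i, n i = 1 → coeff (Finsupp.single i 2) Q = 0) :
    rename (fun i => ⟨i, 0⟩) Q ∈ bottIdeal k n a ↔ Q = 0 := by
  refine ⟨fun hmem => ?_, fun h => by rw [h, map_zero]; exact Ideal.zero_mem _⟩
  have hprod (i : Fin k) : (∏ m, bottLinearForm a i m).IsHomogeneous (n i) := by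
    simpa using IsHomogeneous.prod Finset.univ (bottLinearForm a i) (fun _ => 1)
      fun m _ => isHomogeneous_bottLinearForm a i m
  have hlead (i : Fin k) (hi : n i = 1) :
      coeff (Finsupp.single i 1) (∏ m, bottLinearForm a i m) ∈ nonZeroDivisors (ZMod 2) := by
    have : Subsingleton (Fin (n i)) := by rw [hi]; infer_instance
    rw [Fintype.prod_subsingleton _ ⟨0, hn i⟩, coeff_single_bottLinearForm_self, hdiag]
    exact one_mem _
  have hmem' := bottIdeal_le_comap_bottElimination a hmem
  rw [Ideal.mem_comap, bottElimination_rename] at hmem'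
  exact (isHomogeneous_two_mem_span_X_mul_iff hn hprod hlead hQ hsq).mp hmem'

theorem rename_upperQuadForm_mem_bottIdeal_iff (hn : ∀ i, 1 ≤ n i) (hdiag : ∀ i m, a i i m = 1)
    {c : Fin k → Fin k → ZMod 2} (hc : ∀ s, n s = 1 → c s s = 0) :
    rename (fun i => ⟨i, 0⟩) (upperQuadForm c) ∈ bottIdeal k n a ↔ ∀ r s, r ≤ s → c r s = 0 := by
  rw [rename_mem_bottIdeal_iff_of_isHomogeneous_two hn hdiag
    (isHomogeneous_upperQuadForm c) fun s hs => ?_, upperQuadForm_eq_zero_iff]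
  have htwo : Finsupp.single s 2 = Finsupp.single s 1 + Finsupp.single s 1 := by
    rw [← Finsupp.single_add]
  rw [htwo, coeff_upperQuadForm c le_rfl, hc s hs]

end Elimination

theorem stmt_16_general {k : ℕ} {n : Fin k → ℕ} (hn : ∀ i, 1 ≤ n i)
    {a : Fin k → (i : Fin k) → Fin (n i) → ZMod 2} (hdiag : ∀ i m, a i i m = 1)
    {p : Fin k → Prop} [DecidablePred p] (hp : ∀ i, p i → 2 ≤ n i)
    (b : Fin k → ZMod 2) (c d : Fin k → Fin k → ZMod 2) :
    ∑ s with p s, C (b s) * X ⟨s, 0⟩ ^ 2 +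
          ∑ r, ∑ s with r < s ∧ p s, C (c r s) * (X ⟨r, 0⟩ * X ⟨s, 0⟩) +
        ∑ r, ∑ s with r < s ∧ ¬ p s, C (d r s) * (X ⟨r, 0⟩ * X ⟨s, 0⟩) ∈ bottIdeal k n a ↔
      (∀ s, p s → b s = 0) ∧ (∀ r s, r < s → p s → c r s = 0) ∧
        ∀ r s, r < s → ¬ p s → d r s = 0 := by
  have hrename := congrArg (rename fun i => (⟨i, 0⟩ : Σ i : Fin k, Fin (n i + 1)))
    (sum_sq_add_sum_add_sum_eq_upperQuadForm p b c d)
  simp only [map_add, map_sum, map_mul, map_pow, rename_C, rename_X] at hrename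
  rw [hrename, rename_upperQuadForm_mem_bottIdeal_iff hn hdiag fun s hs => by grind]
  constructor
  · intro h
    refine ⟨fun s hs => ?_, fun r s hrs hs => ?_, fun r s hrs hs => ?_⟩
    · simpa [hs] using h s s le_rfl
    · simpa [hs, hrs.ne] using h r s hrs.le
    · simpa [hs, hrs.ne] using h r s hrs.le
  · grind

/-- Suppose `A` is in unipotent upper triangular form, satisfies the
orientability condition, `n_1, …, n_l ≥ 2` and `n_{l+1} = ⋯ = n_k = 1`.  Then
`Σ_{s≤l} (1 + T_s) x_{s,0}² + Σ_{r<s≤l} T_{rs} x_{r,0} x_{s,0}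
  + Σ_{r<s, s>l} (T_{rs} + a_{r,1}^s (1 + T_s)) x_{r,0} x_{s,0} ∈ I`
iff `T_s = 1` for all `s ≤ l`, `T_{rs} = 0` for all `r < s ≤ l`, and
`T_{rs} + a_{r,1}^s (1 + T_s) = 0` for all `r < s` with `s > l`. -/
theorem stmt_16 (k l : ℕ) (hk : 1 ≤ k) (hl : l ≤ k) (n : Fin k → ℕ) (hn : ∀ i, 1 ≤ n i)
    (a : Fin k → (i : Fin k) → Fin (n i) → ZMod 2)
    (hUT : ∀ j i : Fin k, i < j → ∀ m : Fin (n i), a j i m = 0)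
    (hdiag : ∀ i : Fin k, ∀ m : Fin (n i), a i i m = 1)
    (hOr : ∀ j : Fin k, (∑ i : Fin k, ∑ m : Fin (n i), a j i m) = 1)
    (h2 : ∀ i : Fin k, (i : ℕ) < l → 2 ≤ n i)
    (h1 : ∀ i : Fin k, l ≤ (i : ℕ) → n i = 1) :
    ((∑ s ∈ Finset.univ.filter (fun s : Fin k => (s : ℕ) < l),
        C (1 + Tq k n a s) * X (⟨s, 0⟩ : Σ i : Fin k, Fin (n i + 1)) ^ 2)
      + (∑ r : Fin k, ∑ s ∈ Finset.univ.filter (fun s : Fin k => r < s ∧ (s : ℕ) < l),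
          C (Trs k n a r s)
            * (X (⟨r, 0⟩ : Σ i : Fin k, Fin (n i + 1))
              * X (⟨s, 0⟩ : Σ i : Fin k, Fin (n i + 1))))
      + (∑ r : Fin k, ∑ s ∈ Finset.univ.filter (fun s : Fin k => r < s ∧ l ≤ (s : ℕ)),
          C (Trs k n a r s + a r s ⟨0, hn s⟩ * (1 + Tq k n a s))
            * (X (⟨r, 0⟩ : Σ i : Fin k, Fin (n i + 1))
              * X (⟨s, 0⟩ : Σ i : Fin k, Fin (n i + 1))))
      ∈ bottIdeal k n a)
    ↔ ((∀ s : Fin k, (s : ℕ) < l → Tq k n a s = 1) ∧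
       (∀ r s : Fin k, r < s → (s : ℕ) < l → Trs k n a r s = 0) ∧
       (∀ r s : Fin k, r < s → l ≤ (s : ℕ) →
          Trs k n a r s + a r s ⟨0, hn s⟩ * (1 + Tq k n a s) = 0)) := by
  simpa only [not_lt, CharTwo.add_eq_zero, @eq_comm _ (1 : ZMod 2)] using
    stmt_16_general hn hdiag h2 (1 + Tq k n a ·) (Trs k n a)
      fun r s => Trs k n a r s + a r s ⟨0, hn s⟩ * (1 + Tq k n a s)
end
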